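/- arXiv:1810.03850 — 3 statements merged into one kernel-verified Lean document; each statement's English description precedes it below -/
import Mathlib

section
/- Let α ∈ (0,|s|), Λ > 1, K ≥ 1 and m, r ∈ ℕ. There exist constants C > 0 and L > 0, depending only on d, s, α, Λ, K, m and r, such that the following holds: for every ε ∈ (0,1), every centered jointly Gaussian random field (Φ_ε(x))_{x∈ℝ^d} whose covariance (x,y) ↦ E(Φ_ε(x)Φ_ε(y)) satisfies the standing covariance bound with parameters (α, Λ, ε), every θ ∈ ℝ and all points x₁, …, x_K ∈ ℝ^d, |E ∏_{j=1}^{K} ∂_θ^r 𝓗_m(e^{iθΦ_ε(x_j)})| ≤ C · max_{Γ ∈ Ω*} |Γ|, where Ω* is defined with respect to the clusters of x₁, …, x_K at scale Lε (for any fixed choice of representatives) and graph values are taken with R(i,j) := E(Φ_ε(x_i)Φ_ε(x_j)). -/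
open MeasureTheory ProbabilityTheory Filter

noncomputable section

def anorm {d : ℕ} (s : Fin d → ℝ) (x : Fin d → ℝ) : ℝ :=
  ∑ j, |x j| ^ (1 / s j)

def CovBound {d : ℕ} (s : Fin d → ℝ) (α Λ ε : ℝ)
    (R : (Fin d → ℝ) → (Fin d → ℝ) → ℝ) : Prop :=
  ∀ x y, ε ^ α / (Λ * (anorm s (x - y) + ε) ^ α) ≤ R x y ∧
    R x y ≤ Λ * ε ^ α / (anorm s (x - y) + ε) ^ α

def IsCenteredGaussianFamily {Ω ι : Type*} [MeasurableSpace Ω] (P : Measure Ω)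
    (X : ι → Ω → ℝ) : Prop :=
  ∀ (A : Finset ι) (c : ι → ℝ), ∃ v : NNReal,
    Measure.map (fun ω => ∑ i ∈ A, c i * X i ω) P = gaussianReal 0 v

def wick (v : ℝ) (n : ℕ) (x : ℝ) : ℝ :=
  Real.sqrt v ^ n * Polynomial.aeval (x / Real.sqrt v) (Polynomial.hermite n)

def hFun (m : ℕ) (θ x a : ℝ) : ℂ :=
  Complex.exp (Complex.I * θ * x) -
    ∑ n ∈ Finset.range m, (Complex.I ^ n / (n.factorial : ℂ)) * (θ : ℂ) ^ n *
      Complex.exp (((-(a * θ ^ 2) / 2 : ℝ) : ℂ)) * ((wick a n x : ℝ) : ℂ)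

def SameCluster {d K : ℕ} (s : Fin d → ℝ) (δ : ℝ) (x : Fin K → Fin d → ℝ) :
    Fin K → Fin K → Prop :=
  Relation.ReflTransGen fun i j => anorm s (x i - x j) ≤ δ

def IsSingletonIdx {d K : ℕ} (s : Fin d → ℝ) (δ : ℝ) (x : Fin K → Fin d → ℝ)
    (i : Fin K) : Prop :=
  ∀ j, SameCluster s δ x i j → j = i

def gdeg {K : ℕ} (G : Fin K → Fin K → ℕ) (i : Fin K) : ℕ := ∑ j, G i j

def pairs (K : ℕ) : Finset (Fin K × Fin K) :=
  Finset.univ.filter fun p => p.1 < p.2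

def gval {K : ℕ} (R : Fin K → Fin K → ℝ) (G : Fin K → Fin K → ℕ) : ℝ :=
  ∏ p ∈ pairs K, R p.1 p.2 ^ G p.1 p.2

def InOmegaStar {K : ℕ} (Sing : Fin K → Prop) (u : Fin K → Fin K) (m : ℕ)
    (G : Fin K → Fin K → ℕ) : Prop :=
  (∀ i, Sing i → gdeg G i = m ∨ gdeg G i = m + 1) ∧
  (∀ i, ¬ Sing i → u i = i →
    gdeg G i ≤ m + 1 ∧ (1 ≤ gdeg G i → ∃ s', Sing s' ∧ G s' i = gdeg G i)) ∧
  (∀ i, ¬ Sing i → u i ≠ i → gdeg G i = 0)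

/-- The polynomials `∂_tⁿ exp (b t + a t² / 2) / exp (b t + a t² / 2)` in `y = b + a t`. -/
def hermiteAux (a y : ℂ) : ℕ → ℂ
  | 0 => 1
  | 1 => y
  | n + 2 => y * hermiteAux a y (n + 1) + (n + 1) * a * hermiteAux a y n

lemma hermiteAux_succ (a y : ℂ) (n : ℕ) :
    hermiteAux a y (n + 1) = y * hermiteAux a y n + n * a * hermiteAux a y (n - 1) := by
  cases n <;> simp [hermiteAux]

lemma hasDerivAt_hermiteAux (a : ℂ) (n : ℕ) (y : ℂ) :
    HasDerivAt (fun y => hermiteAux a y n) (n * hermiteAux a y (n - 1)) y := by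
  induction n using Nat.strong_induction_on with
  | _ n ih =>
    match n with
    | 0 => simpa [hermiteAux] using hasDerivAt_const y (1 : ℂ)
    | 1 => simpa [hermiteAux] using hasDerivAt_id' y
    | n + 2 =>
      have h1 := ih (n + 1) (by omega)
      have h0 := ih n (by omega)
      have h := ((hasDerivAt_id y).mul h1).add (h0.const_mul ((n + 1) * a))
      refine h.congr_deriv ?_
      simp only [id, Nat.add_sub_cancel, show n + 2 - 1 = n + 1 from rfl]
      rw [hermiteAux_succ a y n]
      push_cast
      ring

lemma norm_hermiteAux_le {a : ℂ} {A : ℝ} (ha : ‖a‖ ≤ A) (y : ℂ) (n : ℕ) :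
    ‖hermiteAux a y n‖ ≤ n.factorial * (1 + A) ^ n * (1 + ‖y‖) ^ n := by
  have hA : 0 ≤ A := (norm_nonneg a).trans ha
  have hy : 0 ≤ ‖y‖ := norm_nonneg y
  induction n using Nat.strong_induction_on with
  | _ n ih =>
    match n with
    | 0 => simp [hermiteAux]
    | 1 =>
      simp only [hermiteAux, Nat.factorial_one, Nat.cast_one, pow_one, one_mul]
      nlinarith
    | n + 2 =>
      have h1 := ih (n + 1) (by omega)
      have h0 := ih n (by omega)
      set B : ℝ := (n + 1).factorial * (1 + A) ^ (n + 1) * (1 + ‖y‖) ^ (n + 1) with hB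
      have hB0 : 0 ≤ B := by positivity
      have hn : ‖((n : ℂ) + 1)‖ = n + 1 := by
        have := Complex.norm_natCast (n + 1)
        push_cast at this
        exact this
      have hlow : (n + 1) * A * (n.factorial * (1 + A) ^ n * (1 + ‖y‖) ^ n) ≤ B * (1 + ‖y‖) := by
        have : (n + 1) * A * (n.factorial * (1 + A) ^ n * (1 + ‖y‖) ^ n)
            = (n + 1).factorial * ((1 + A) ^ n * A) * (1 + ‖y‖) ^ n := by
          rw [Nat.factorial_succ]; push_cast; ring
        rw [this, hB]
        have e : (n + 1).factorial * (1 + A) ^ (n + 1) * (1 + ‖y‖) ^ (n + 1) * (1 + ‖y‖)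
            = (n + 1).factorial * ((1 + A) ^ n * (1 + A)) * (1 + ‖y‖) ^ (n + 2) := by ring
        rw [e]
        gcongr
        · linarith
        · linarith
        · omega
      have hmain : ‖hermiteAux a y (n + 2)‖ ≤ ‖y‖ * B
          + (n + 1) * A * (n.factorial * (1 + A) ^ n * (1 + ‖y‖) ^ n) := by
        rw [hermiteAux]
        refine (norm_add_le _ _).trans ?_
        rw [norm_mul, norm_mul, norm_mul, hn]
        gcongr
      have hfin : 2 * (B * (1 + ‖y‖)) ≤
          (n + 2).factorial * (1 + A) ^ (n + 2) * (1 + ‖y‖) ^ (n + 2) := by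
        have e : ((n + 2).factorial : ℝ) * (1 + A) ^ (n + 2) * (1 + ‖y‖) ^ (n + 2)
            = (n + 2) * (1 + A) * (B * (1 + ‖y‖)) := by
          rw [hB, Nat.factorial_succ (n + 1)]; push_cast; ring
        rw [e]
        have : (2 : ℝ) ≤ (n + 2) * (1 + A) := by
          have : (0 : ℝ) ≤ n := by positivity
          nlinarith
        gcongr
      nlinarith

/-- The `n`-th derivative of `t ↦ exp (b t + a t² / 2)`. -/
def gaussExp (a b : ℂ) (n : ℕ) (t : ℝ) : ℂ :=
  hermiteAux a (b + a * t) n * Complex.exp (b * t + a * t ^ 2 / 2)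

lemma hasDerivAt_gaussExp (a b : ℂ) (n : ℕ) (t : ℝ) :
    HasDerivAt (gaussExp a b n) (gaussExp a b (n + 1) t) t := by
  have hid : HasDerivAt (fun z : ℂ => z) 1 (t : ℂ) := hasDerivAt_id _
  have hl : HasDerivAt (fun z : ℂ => b + a * z) a (t : ℂ) := by
    simpa using (hid.const_mul a).const_add b
  have hp := (hasDerivAt_hermiteAux a n (b + a * t)).comp (t : ℂ) hl
  have hq : HasDerivAt (fun z : ℂ => b * z + a * z ^ 2 / 2) (b + a * t) (t : ℂ) := by
    have := (hid.const_mul b).add (((hid.pow 2).const_mul a).div_const 2)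
    refine this.congr_deriv ?_
    norm_num
    ring
  have h := (hp.mul hq.cexp).comp_ofReal
  refine h.congr_deriv ?_
  simp only [gaussExp, Function.comp, hermiteAux_succ]
  ring

lemma iteratedDeriv_of_hasDerivAt {f : ℕ → ℝ → ℂ}
    (hf : ∀ n t, HasDerivAt (f n) (f (n + 1) t) t) (k n : ℕ) :
    iteratedDeriv k (f n) = f (n + k) := by
  induction k generalizing n with
  | zero => simp
  | succ k ih =>
    rw [iteratedDeriv_succ', show deriv (f n) = f (n + 1) from funext fun t => (hf n t).deriv, ih]
    congr 1
    omega

lemma contDiff_of_hasDerivAt {f : ℕ → ℝ → ℂ}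
    (hf : ∀ n t, HasDerivAt (f n) (f (n + 1) t) t) (k n : ℕ) : ContDiff ℝ k (f n) := by
  refine contDiff_of_differentiable_iteratedDeriv (n := k) fun j _ => ?_
  rw [iteratedDeriv_of_hasDerivAt hf]
  exact fun t => (hf _ t).differentiableAt

/-- The remainder of order `q` of the Taylor expansion of `f k` at `0`, where `f (n + 1)` is the
derivative of `f n`. -/
def taylorRem (f : ℕ → ℝ → ℂ) (q k : ℕ) (t : ℝ) : ℂ :=
  f k t - ∑ n ∈ Finset.range q, (t : ℂ) ^ n / n.factorial * f (k + n) 0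

lemma hasDerivAt_taylorRem {f : ℕ → ℝ → ℂ} (hf : ∀ n t, HasDerivAt (f n) (f (n + 1) t) t)
    (q k : ℕ) (t : ℝ) :
    HasDerivAt (taylorRem f q k) (taylorRem f (q - 1) (k + 1) t) t := by
  cases q with
  | zero =>
    have h : ∀ k, taylorRem f 0 k = f k := fun k => funext fun s => by simp [taylorRem]
    simpa [h] using hf k t
  | succ q =>
    have hid : HasDerivAt (fun s : ℝ => (s : ℂ)) 1 t := (hasDerivAt_id (t : ℂ)).comp_ofReal
    have hsum : HasDerivAt
        (fun s : ℝ => ∑ n ∈ Finset.range (q + 1), (s : ℂ) ^ n / n.factorial * f (k + n) 0)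
        (∑ n ∈ Finset.range q, (t : ℂ) ^ n / n.factorial * f (k + 1 + n) 0) t := by
      have h := HasDerivAt.fun_sum (u := Finset.range (q + 1)) fun n _ =>
        ((hid.pow n).div_const (n.factorial : ℂ)).mul_const (f (k + n) 0)
      refine h.congr_deriv ?_
      rw [Finset.sum_range_succ']
      simp only [Nat.cast_zero, zero_mul, zero_div, add_zero]
      refine Finset.sum_congr rfl fun n _ => ?_
      have : ((n : ℂ) + 1) ≠ 0 := Nat.cast_add_one_ne_zero n
      have hfac : (n.factorial : ℂ) ≠ 0 := by exact_mod_cast n.factorial_ne_zero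
      rw [Nat.factorial_succ, show k + (n + 1) = k + 1 + n by omega]
      push_cast
      field_simp
    exact (hf k t).sub hsum

lemma iteratedDeriv_taylorRem {f : ℕ → ℝ → ℂ} (hf : ∀ n t, HasDerivAt (f n) (f (n + 1) t) t)
    (m k : ℕ) : iteratedDeriv k (taylorRem f m 0) = taylorRem f (m - k) k := by
  have := iteratedDeriv_of_hasDerivAt (f := fun k => taylorRem f (m - k) k)
    (fun n t => hasDerivAt_taylorRem hf (m - n) n t) k 0
  simpa using this

lemma contDiff_taylorRem {f : ℕ → ℝ → ℂ} (hf : ∀ n t, HasDerivAt (f n) (f (n + 1) t) t)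
    (m k : ℕ) : ContDiff ℝ k (taylorRem f m 0) := by
  have := contDiff_of_hasDerivAt (f := fun k => taylorRem f (m - k) k)
    (fun n t => hasDerivAt_taylorRem hf (m - n) n t) k 0
  simpa using this

lemma norm_taylorRem_le {f : ℕ → ℝ → ℂ} (hf : ∀ n t, HasDerivAt (f n) (f (n + 1) t) t)
    {θ M : ℝ} (q k : ℕ) (hM : ∀ t ∈ Set.uIcc 0 θ, ‖f (k + q) t‖ ≤ M) :
    ∀ t ∈ Set.uIcc 0 θ, ‖taylorRem f q k t‖ ≤ |θ| ^ q * M := by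
  induction q generalizing k with
  | zero => simpa [taylorRem] using hM
  | succ q ih =>
    intro t ht
    have ih' := ih (k + 1) (by simpa only [show k + 1 + q = k + (q + 1) by omega] using hM)
    have h0 : (0 : ℝ) ∈ Set.uIcc 0 θ := Set.left_mem_uIcc
    have h := (convex_uIcc (0 : ℝ) θ).norm_image_sub_le_of_norm_hasDerivWithin_le
      (fun s _ => (hasDerivAt_taylorRem hf (q + 1) k s).hasDerivWithinAt) ih' h0 ht
    have hz : taylorRem f (q + 1) k 0 = 0 := by
      simp [taylorRem, Finset.sum_range_succ']
    rw [hz, sub_zero, sub_zero] at h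
    have hM0 : 0 ≤ M := (norm_nonneg _).trans (hM 0 h0)
    have htθ : |t| ≤ |θ| := by
      have := Set.abs_sub_left_of_mem_uIcc ht
      simpa using this
    calc ‖taylorRem f (q + 1) k t‖ ≤ |θ| ^ q * M * ‖t‖ := h
      _ ≤ |θ| ^ q * M * |θ| := by rw [Real.norm_eq_abs]; gcongr
      _ = |θ| ^ (q + 1) * M := by ring

lemma derivative_hermite_succ (n : ℕ) : Polynomial.derivative (Polynomial.hermite (n + 1))
    = (n + 1 : Polynomial ℤ) * Polynomial.hermite n := by
  induction n with
  | zero => simp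
  | succ n ih =>
    rw [Polynomial.hermite_succ (n + 1), map_sub, Polynomial.derivative_mul, ih,
      Polynomial.derivative_mul, Polynomial.hermite_succ n]
    simp
    ring

lemma wick_succ_succ {a : ℝ} (ha : 0 < a) (n : ℕ) (x : ℝ) :
    wick a (n + 2) x = x * wick a (n + 1) x - (n + 1) * a * wick a n x := by
  have hsa : Real.sqrt a ≠ 0 := (Real.sqrt_pos.2 ha).ne'
  have hsq : Real.sqrt a ^ 2 = a := Real.sq_sqrt ha.le
  simp only [wick]
  rw [Polynomial.hermite_succ (n + 1), derivative_hermite_succ]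
  simp only [map_sub, map_mul, Polynomial.aeval_X, map_add, map_natCast, map_one]
  set A := (Polynomial.aeval (x / Real.sqrt a)) (Polynomial.hermite (n + 1))
  set B := (Polynomial.aeval (x / Real.sqrt a)) (Polynomial.hermite n)
  have h1 : Real.sqrt a ^ (n + 2) * (x / Real.sqrt a * A) = x * (Real.sqrt a ^ (n + 1) * A) := by
    field_simp
    ring
  rw [mul_sub, h1]
  linear_combination (-(n + 1) * Real.sqrt a ^ n * B) * hsq

lemma hermiteAux_I_mul {a : ℝ} (ha : 0 < a) (x : ℝ) (n : ℕ) :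
    hermiteAux a (Complex.I * x) n = Complex.I ^ n * (wick a n x : ℝ) := by
  have hsa : Real.sqrt a ≠ 0 := (Real.sqrt_pos.2 ha).ne'
  induction n using Nat.strong_induction_on with
  | _ n ih =>
    match n with
    | 0 => simp [hermiteAux, wick]
    | 1 => simp [hermiteAux, wick, mul_div_cancel₀ x hsa]
    | n + 2 =>
      rw [hermiteAux, ih (n + 1) (by omega), ih n (by omega), wick_succ_succ ha]
      push_cast
      linear_combination (Complex.I ^ n * (n + 1) * a * wick a n x) * Complex.I_sq

lemma hFun_eq {a : ℝ} (ha : 0 < a) (m : ℕ) (x t : ℝ) :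
    hFun m t x a = gaussExp (-a) 0 0 t * taylorRem (gaussExp a (Complex.I * x)) m 0 t := by
  simp only [hFun, taylorRem, gaussExp, hermiteAux, mul_sub, Finset.mul_sum]
  congr 1
  · rw [one_mul, one_mul, ← Complex.exp_add]
    congr 1
    ring
  · refine Finset.sum_congr rfl fun n _ => ?_
    have e : Complex.I * x + a * ((0 : ℝ) : ℂ) = Complex.I * x := by simp
    rw [zero_add, e, hermiteAux_I_mul ha]
    simp only [Complex.ofReal_zero]
    have e2 : (((-(a * t ^ 2) / 2 : ℝ) : ℂ)) = 0 * (t : ℂ) + -a * t ^ 2 / 2 := by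
      push_cast; ring
    rw [e2]
    simp
    ring

lemma iteratedDeriv_hFun {a : ℝ} (ha : 0 < a) (m r : ℕ) (x θ : ℝ) :
    iteratedDeriv r (fun t => hFun m t x a) θ = ∑ k ∈ Finset.range (r + 1),
      (r.choose k : ℂ) * gaussExp (-a) 0 (r - k) θ *
        taylorRem (gaussExp a (Complex.I * x)) (m - k) k θ := by
  have e : (fun t => hFun m t x a) = fun t =>
      taylorRem (gaussExp a (Complex.I * x)) m 0 t * gaussExp (-a) 0 0 t :=
    funext fun t => by rw [hFun_eq ha, mul_comm]
  rw [e, iteratedDeriv_fun_mul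
    (contDiff_taylorRem (hasDerivAt_gaussExp _ _) m r).contDiffAt
    (contDiff_of_hasDerivAt (hasDerivAt_gaussExp _ _) r 0).contDiffAt]
  refine Finset.sum_congr rfl fun k _ => ?_
  rw [iteratedDeriv_taylorRem (hasDerivAt_gaussExp _ _),
    iteratedDeriv_of_hasDerivAt (hasDerivAt_gaussExp _ _), zero_add]
  ring

/-- The graph with vertices `i` and `j` joined by one edge. -/
def singleEdge {K : ℕ} (i j : Fin K) : Fin K → Fin K → ℕ :=
  fun a b => if (a = i ∧ b = j) ∨ (a = j ∧ b = i) then 1 else 0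

/-- Symmetric multiplicities without self-loops. -/
def IsMultigraph {K : ℕ} (G : Fin K → Fin K → ℕ) : Prop :=
  (∀ i j, G i j = G j i) ∧ ∀ i, G i i = 0

lemma isMultigraph_add_singleEdge {K : ℕ} {G : Fin K → Fin K → ℕ} (hG : IsMultigraph G)
    {i j : Fin K} (hij : i ≠ j) : IsMultigraph (G + singleEdge i j) := by
  refine ⟨fun a b => ?_, fun a => ?_⟩
  · have := hG.1 a b
    simp only [Pi.add_apply, singleEdge]
    grind
  · have := hG.2 a
    simp only [Pi.add_apply, singleEdge]
    grind

lemma exists_eq_add_singleEdge {K : ℕ} {G : Fin K → Fin K → ℕ} (hG : IsMultigraph G)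
    {i j : Fin K} (hij : 1 ≤ G i j) :
    i ≠ j ∧ ∃ G', IsMultigraph G' ∧ G = G' + singleEdge i j := by
  have hne : i ≠ j := by
    rintro rfl
    have := hG.2 i
    omega
  refine ⟨hne, fun a b => G a b - singleEdge i j a b, ⟨fun a b => ?_, fun a => ?_⟩, ?_⟩
  · have := hG.1 a b
    simp only [singleEdge]
    grind
  · have := hG.2 a
    simp [this]
  · funext a b
    have := hG.1 i j
    simp only [Pi.add_apply, singleEdge]
    grind

lemma gdeg_add {K : ℕ} (G G' : Fin K → Fin K → ℕ) (a : Fin K) :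
    gdeg (G + G') a = gdeg G a + gdeg G' a := by
  simp [gdeg, Finset.sum_add_distrib]

lemma gdeg_singleEdge {K : ℕ} {i j : Fin K} (hij : i ≠ j) (a : Fin K) :
    gdeg (singleEdge i j) a = (if a = i then 1 else 0) + (if a = j then 1 else 0) := by
  have : ∀ b, singleEdge i j a b = (if b = j then (if a = i then 1 else 0) else 0)
      + (if b = i then (if a = j then 1 else 0) else 0) := by
    intro b
    simp only [singleEdge]
    grind
  simp only [gdeg, this, Finset.sum_add_distrib, Finset.sum_ite_eq', Finset.mem_univ, if_true]

lemma le_gdeg {K : ℕ} (G : Fin K → Fin K → ℕ) (i j : Fin K) : G i j ≤ gdeg G i :=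
  Finset.single_le_sum (f := fun j => G i j) (fun _ _ => Nat.zero_le _) (Finset.mem_univ j)

lemma gval_add {K : ℕ} (R : Fin K → Fin K → ℝ) (G G' : Fin K → Fin K → ℕ) :
    gval R (G + G') = gval R G * gval R G' := by
  simp [gval, pow_add, Finset.prod_mul_distrib]

lemma gval_singleEdge {K : ℕ} {R : Fin K → Fin K → ℝ} (hR : ∀ i j, R i j = R j i)
    {i j : Fin K} (hij : i ≠ j) : gval R (singleEdge i j) = R i j := by
  wlog h : i < j generalizing i j
  · have e : singleEdge i j = singleEdge j i := by
      funext a b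
      simp only [singleEdge]
      grind
    rw [e, hR i j]
    exact this hij.symm (lt_of_le_of_ne (not_lt.1 h) hij.symm)
  · rw [gval, Finset.prod_eq_single (i, j)]
    · simp [singleEdge]
    · rintro ⟨a, b⟩ hab hne
      have hlt : a < b := by simpa [pairs] using hab
      have : singleEdge i j a b = 0 := by
        simp only [singleEdge]
        grind
      simp [this]
    · intro h'
      simp [pairs, h] at h'

lemma gval_add_singleEdge {K : ℕ} {R : Fin K → Fin K → ℝ} (hR : ∀ i j, R i j = R j i)
    (G : Fin K → Fin K → ℕ) {i j : Fin K} (hij : i ≠ j) :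
    gval R (G + singleEdge i j) = gval R G * R i j := by
  rw [gval_add, gval_singleEdge hR hij]

lemma gval_nonneg {K : ℕ} {R : Fin K → Fin K → ℝ} (hR : ∀ i j, 0 ≤ R i j)
    (G : Fin K → Fin K → ℕ) : 0 ≤ gval R G :=
  Finset.prod_nonneg fun _ _ => pow_nonneg (hR _ _) _

/-- The total degree, where the vertices not fixed by `u` count twice. -/
def weightedDeg {K : ℕ} (u : Fin K → Fin K) (G : Fin K → Fin K → ℕ) : ℕ :=
  ∑ i, (if u i = i then 1 else 2) * gdeg G i

lemma weightedDeg_add_singleEdge {K : ℕ} (u : Fin K → Fin K) (G : Fin K → Fin K → ℕ)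
    {i j : Fin K} (hij : i ≠ j) : weightedDeg u (G + singleEdge i j) = weightedDeg u G
      + ((if u i = i then 1 else 2) + (if u j = j then 1 else 2)) := by
  simp only [weightedDeg, gdeg_add, gdeg_singleEdge hij, mul_add, Finset.sum_add_distrib,
    mul_ite, mul_one, mul_zero, Finset.sum_ite_eq', Finset.mem_univ, if_true]

lemma exists_inOmegaStar {K : ℕ} {R : Fin K → Fin K → ℝ} {C : ℝ} (hC : 1 ≤ C)
    (hsymm : ∀ i j, R i j = R j i) (hpos : ∀ i j, 0 ≤ R i j) (hle : ∀ i j, R i j ≤ C)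
    (htri : ∀ i j k, R i j * R i k ≤ C * R j k) {Sing : Fin K → Prop} {u : Fin K → Fin K}
    (huu : ∀ i, u (u i) = u i) (huS : ∀ i, Sing (u i) → Sing i)
    (hrep : ∀ i j, R j i ≤ C * R j (u i)) {m : ℕ} (G : Fin K → Fin K → ℕ)
    (hG : IsMultigraph G) (hdeg : ∀ i, Sing i → m ≤ gdeg G i) :
    ∃ G', IsMultigraph G' ∧ InOmegaStar Sing u m G' ∧
      gval R G ≤ C ^ weightedDeg u G * gval R G' := by
  have hC0 : 0 ≤ C := zero_le_one.trans hC
  induction hN : weightedDeg u G using Nat.strong_induction_on generalizing G with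
  | _ N ih =>
  have step : ∀ G', IsMultigraph G' → (∀ i, Sing i → m ≤ gdeg G' i) → weightedDeg u G' < N →
      gval R G ≤ C * gval R G' → ∃ G', IsMultigraph G' ∧ InOmegaStar Sing u m G' ∧
        gval R G ≤ C ^ N * gval R G' := by
    intro G' h1 h2 h3 h4
    obtain ⟨G'', k1, k2, k3⟩ := ih _ h3 G' h1 h2 rfl
    refine ⟨G'', k1, k2, h4.trans ?_⟩
    have hv := gval_nonneg hpos G''
    calc C * gval R G' ≤ C * (C ^ weightedDeg u G' * gval R G'') := by gcongr
      _ = C ^ (weightedDeg u G' + 1) * gval R G'' := by ring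
      _ ≤ C ^ N * gval R G'' := by gcongr; exact h3
  have remove : ∀ i j, 1 ≤ G i j → (Sing i → m + 1 ≤ gdeg G i) → (Sing j → m + 1 ≤ gdeg G j) →
      ∃ G', IsMultigraph G' ∧ InOmegaStar Sing u m G' ∧ gval R G ≤ C ^ N * gval R G' := by
    intro i j hij hi hj
    obtain ⟨hne, G', hG', rfl⟩ := exists_eq_add_singleEdge hG hij
    refine step G' hG' (fun a ha => ?_) ?_ ?_
    · have := hdeg a ha
      simp only [gdeg_add, gdeg_singleEdge hne] at this hi hj
      grind
    · rw [weightedDeg_add_singleEdge u G' hne] at hN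
      split_ifs at hN <;> omega
    · rw [gval_add_singleEdge hsymm G' hne, mul_comm]
      exact mul_le_mul_of_nonneg_right (hle i j) (gval_nonneg hpos _)
  have shortcut : ∀ i j k, 1 ≤ G i j → 1 ≤ G i k → j ≠ k → (Sing i → m + 2 ≤ gdeg G i) →
      ∃ G', IsMultigraph G' ∧ InOmegaStar Sing u m G' ∧ gval R G ≤ C ^ N * gval R G' := by
    intro i j k hij hik hjk hi
    obtain ⟨hne, G₁, hG₁, rfl⟩ := exists_eq_add_singleEdge hG hij
    have hik' : 1 ≤ G₁ i k := by
      have : singleEdge i j i k = 0 := by simp only [singleEdge]; grind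
      simpa [this] using hik
    obtain ⟨hne', G₂, hG₂, rfl⟩ := exists_eq_add_singleEdge hG₁ hik'
    refine step (G₂ + singleEdge j k) (isMultigraph_add_singleEdge hG₂ hjk) (fun a ha => ?_) ?_ ?_
    · have := hdeg a ha
      simp only [gdeg_add, gdeg_singleEdge hne, gdeg_singleEdge hne', gdeg_singleEdge hjk]
        at this hi ⊢
      grind
    · rw [weightedDeg_add_singleEdge u _ hne, weightedDeg_add_singleEdge u _ hne'] at hN
      rw [weightedDeg_add_singleEdge u _ hjk]
      have : 1 ≤ if u i = i then 1 else 2 := by split_ifs <;> omega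
      omega
    · rw [gval_add_singleEdge hsymm _ hne, gval_add_singleEdge hsymm _ hne',
        gval_add_singleEdge hsymm _ hjk]
      nlinarith [gval_nonneg hpos G₂, mul_le_mul_of_nonneg_left (htri i j k) (gval_nonneg hpos G₂)]
  have exists_edge : ∀ i, 1 ≤ gdeg G i → ∃ j, 1 ≤ G i j := by
    intro i hi
    by_contra! h
    have : gdeg G i = 0 := Finset.sum_eq_zero fun j _ => by have := h j; omega
    omega
  have star : ∀ i j, 1 ≤ G i j → (∀ k, 1 ≤ G i k → j = k) → G i j = gdeg G i := by
    intro i j _ h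
    refine (Finset.sum_eq_single j (fun k _ hk => ?_) (by simp)).symm
    by_contra hne
    exact hk (h k (by omega)).symm
  by_cases hmem : InOmegaStar Sing u m G
  · exact ⟨G, hG, hmem, le_mul_of_one_le_left (gval_nonneg hpos _) (one_le_pow₀ hC)⟩
  have cases : (∃ i, Sing i ∧ m + 2 ≤ gdeg G i) ∨
      (∃ i, ¬ Sing i ∧ u i = i ∧ 1 ≤ gdeg G i ∧
        (m + 2 ≤ gdeg G i ∨ ∀ s', Sing s' → G s' i ≠ gdeg G i)) ∨
      ∃ i, ¬ Sing i ∧ u i ≠ i ∧ 1 ≤ gdeg G i := by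
    by_contra! h
    obtain ⟨h1, h2, h3⟩ := h
    refine hmem ⟨fun i hi => ?_, fun i hi hui => ⟨?_, fun h => ?_⟩, fun i hi hui => ?_⟩
    · have := h1 i hi
      have := hdeg i hi
      omega
    · by_contra hgt
      have := (h2 i hi hui (by omega)).1
      omega
    · exact (h2 i hi hui h).2
    · have := h3 i hi hui
      omega
  rcases cases with ⟨i, hi, hd⟩ | ⟨i, hi, hui, hd, hbad⟩ | ⟨i, hi, hui, hd⟩
  · obtain ⟨j, hj⟩ := exists_edge i (by omega)
    by_cases h : ∀ k, 1 ≤ G i k → j = k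
    · have h1 := star i j hj h
      have h2 := le_gdeg G j i
      have h3 := hG.1 i j
      exact remove i j hj (fun _ => by omega) fun _ => by omega
    · push Not at h
      obtain ⟨k, hk, hjk⟩ := h
      exact shortcut i j k hj hk hjk fun _ => hd
  · obtain ⟨j, hj⟩ := exists_edge i hd
    by_cases hjS : Sing j
    · by_cases h : ∀ k, 1 ≤ G i k → j = k
      · have h1 := star i j hj h
        have h2 := le_gdeg G j i
        have h3 := hG.1 i j
        rcases hbad with hbad | hbad
        · exact remove i j hj (fun h => absurd h hi) fun _ => by omega
        · exact absurd (h3.symm.trans h1) (hbad j hjS)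
      · push Not at h
        obtain ⟨k, hk, hjk⟩ := h
        exact shortcut i j k hj hk hjk fun h => absurd h hi
    · exact remove i j hj (fun h => absurd h hi) fun h => absurd h hjS
  · obtain ⟨j, hj⟩ := exists_edge i hd
    by_cases hjS : Sing j
    · have hju : j ≠ u i := by
        rintro rfl
        exact hi (huS i hjS)
      obtain ⟨hne, G', hG', rfl⟩ := exists_eq_add_singleEdge hG hj
      refine step (G' + singleEdge j (u i)) (isMultigraph_add_singleEdge hG' hju)
        (fun a ha => ?_) ?_ ?_
      · have := hdeg a ha
        simp only [gdeg_add, gdeg_singleEdge hne, gdeg_singleEdge hju] at this ⊢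
        grind
      · rw [weightedDeg_add_singleEdge u _ hne] at hN
        rw [weightedDeg_add_singleEdge u _ hju]
        simp only [huu, hui, if_true, if_false] at hN ⊢
        omega
      · rw [gval_add_singleEdge hsymm _ hne, gval_add_singleEdge hsymm _ hju, hsymm i j]
        nlinarith [gval_nonneg hpos G', mul_le_mul_of_nonneg_left (hrep i j) (gval_nonneg hpos G')]
    · exact remove i j hj (fun h => absurd h hi) fun h => absurd h hjS

lemma bddAbove_gval {K : ℕ} {R : Fin K → Fin K → ℝ} {C : ℝ} (hC : 1 ≤ C)
    (hpos : ∀ i j, 0 ≤ R i j) (hle : ∀ i j, R i j ≤ C) (Sing : Fin K → Prop)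
    (u : Fin K → Fin K) (m : ℕ) :
    BddAbove {v : ℝ | ∃ G : Fin K → Fin K → ℕ, (∀ i j, G i j = G j i) ∧ (∀ i, G i i = 0) ∧
      InOmegaStar Sing u m G ∧ v = gval R G} := by
  refine ⟨∏ _p ∈ pairs K, C ^ (m + 1), ?_⟩
  rintro v ⟨G, -, -, hG, rfl⟩
  refine Finset.prod_le_prod (fun _ _ => pow_nonneg (hpos _ _) _) fun p _ => ?_
  have hd : gdeg G p.1 ≤ m + 1 := by
    by_cases h : Sing p.1
    · rcases hG.1 _ h with h | h <;> omega
    · by_cases hu : u p.1 = p.1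
      · exact (hG.2.1 _ h hu).1
      · rw [hG.2.2 _ h hu]
        omega
  calc R p.1 p.2 ^ G p.1 p.2 ≤ C ^ G p.1 p.2 := pow_le_pow_left₀ (hpos _ _) (hle _ _) _
    _ ≤ C ^ (m + 1) := pow_le_pow_right₀ hC ((le_gdeg G _ _).trans hd)

lemma anorm_nonneg {d : ℕ} (s x : Fin d → ℝ) : 0 ≤ anorm s x :=
  Finset.sum_nonneg fun _ _ => Real.rpow_nonneg (abs_nonneg _) _

lemma anorm_zero {d : ℕ} {s : Fin d → ℝ} (hs : ∀ j, 1 ≤ s j) : anorm s 0 = 0 := by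
  refine Finset.sum_eq_zero fun j _ => ?_
  have : (1 / s j) ≠ 0 := (one_div_pos.2 (zero_lt_one.trans_le (hs j))).ne'
  simp only [Pi.zero_apply, abs_zero]
  exact Real.zero_rpow this

lemma anorm_sub_comm {d : ℕ} (s x y : Fin d → ℝ) : anorm s (x - y) = anorm s (y - x) := by
  simp only [anorm, Pi.sub_apply, abs_sub_comm]

lemma anorm_sub_le {d : ℕ} {s : Fin d → ℝ} (hs : ∀ j, 1 ≤ s j) (x y z : Fin d → ℝ) :
    anorm s (x - z) ≤ anorm s (x - y) + anorm s (y - z) := by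
  rw [anorm, anorm, anorm, ← Finset.sum_add_distrib]
  refine Finset.sum_le_sum fun j _ => ?_
  have hs0 : 0 < s j := zero_lt_one.trans_le (hs j)
  have h0 : 0 ≤ 1 / s j := (one_div_pos.2 hs0).le
  have h1 : 1 / s j ≤ 1 := (div_le_one hs0).2 (hs j)
  exact (Real.rpow_le_rpow (abs_nonneg _) (abs_sub_le (x j) (y j) (z j)) h0).trans
    (Real.rpow_add_le_add_rpow (abs_nonneg _) (abs_nonneg _) h0 h1)

section Covariance

variable {d : ℕ} {s : Fin d → ℝ} {α Λ ε : ℝ} {R : (Fin d → ℝ) → (Fin d → ℝ) → ℝ}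

lemma CovBound.pos (h : CovBound s α Λ ε R) (hΛ : 1 < Λ) (hε : 0 < ε) (x y : Fin d → ℝ) :
    0 < R x y := by
  have := anorm_nonneg s (x - y)
  exact lt_of_lt_of_le (by positivity) (h x y).1

lemma CovBound.le_ratio (h : CovBound s α Λ ε R) (hε : 0 < ε) (x y : Fin d → ℝ) :
    R x y ≤ Λ * (ε / (anorm s (x - y) + ε)) ^ α := by
  have := anorm_nonneg s (x - y)
  rw [Real.div_rpow hε.le (by positivity), ← mul_div_assoc]
  exact (h x y).2

lemma CovBound.ratio_le (h : CovBound s α Λ ε R) (hΛ : 1 < Λ) (hε : 0 < ε) (x y : Fin d → ℝ) :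
    (ε / (anorm s (x - y) + ε)) ^ α ≤ Λ * R x y := by
  have := anorm_nonneg s (x - y)
  have h1 := (h x y).1
  rw [mul_comm Λ, ← div_div, div_le_iff₀ (by linarith)] at h1
  rw [Real.div_rpow hε.le (by positivity), mul_comm]
  exact h1

lemma ratio_rpow_le_one (hα : 0 < α) (hε : 0 < ε) (x : Fin d → ℝ) :
    (ε / (anorm s x + ε)) ^ α ≤ 1 := by
  have := anorm_nonneg s x
  exact Real.rpow_le_one (by positivity) ((div_le_one (by positivity)).2 (by linarith)) hα.le

lemma CovBound.le_const (h : CovBound s α Λ ε R) (hα : 0 < α) (hΛ : 1 < Λ) (hε : 0 < ε)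
    (x y : Fin d → ℝ) : R x y ≤ Λ := by
  have h1 := h.le_ratio hε x y
  have h2 := ratio_rpow_le_one (s := s) hα hε (x - y)
  nlinarith

lemma CovBound.inv_le_diag (h : CovBound s α Λ ε R) (hs : ∀ j, 1 ≤ s j) (hΛ : 1 < Λ)
    (hε : 0 < ε) (x : Fin d → ℝ) : Λ⁻¹ ≤ R x x := by
  have h1 := h.ratio_le hΛ hε x x
  rw [sub_self, anorm_zero hs, zero_add, div_self hε.ne', Real.one_rpow] at h1
  rw [inv_le_iff_one_le_mul₀' (by linarith)]
  exact h1

lemma CovBound.mul_le (h : CovBound s α Λ ε R) (hs : ∀ j, 1 ≤ s j) (hα : 0 < α) (hΛ : 1 < Λ)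
    (hε : 0 < ε) (x y z : Fin d → ℝ) : R x y * R x z ≤ Λ ^ 3 * 2 ^ α * R y z := by
  have hxy := anorm_nonneg s (x - y)
  have hxz := anorm_nonneg s (x - z)
  have hyz := anorm_nonneg s (y - z)
  have htri := anorm_sub_le hs y x z
  rw [anorm_sub_comm s y x] at htri
  have key : (ε / (anorm s (x - y) + ε)) ^ α * (ε / (anorm s (x - z) + ε)) ^ α ≤
      2 ^ α * (ε / (anorm s (y - z) + ε)) ^ α := by
    have hcmp : ∀ b, 0 ≤ b → anorm s (y - z) ≤ 2 * b →
        (ε / (b + ε)) ^ α ≤ 2 ^ α * (ε / (anorm s (y - z) + ε)) ^ α := by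
      intro b hb hle
      rw [← Real.mul_rpow (by norm_num) (by positivity)]
      refine Real.rpow_le_rpow (by positivity) ?_ hα.le
      rw [← mul_div_assoc, div_le_div_iff₀ (by positivity) (by positivity)]
      nlinarith
    have h1 := ratio_rpow_le_one (s := s) hα hε (x - y)
    have h2 := ratio_rpow_le_one (s := s) hα hε (x - z)
    rcases le_total (anorm s (x - y)) (anorm s (x - z)) with hle | hle
    · exact (mul_le_of_le_one_left (by positivity) h1).trans (hcmp _ hxz (by linarith))
    · exact (mul_le_of_le_one_right (by positivity) h2).trans (hcmp _ hxy (by linarith))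
  have hxzp := (h.pos hΛ hε x z).le
  have hΛ0 : 0 < Λ := by linarith
  calc R x y * R x z ≤ (Λ * (ε / (anorm s (x - y) + ε)) ^ α) *
        (Λ * (ε / (anorm s (x - z) + ε)) ^ α) :=
        mul_le_mul (h.le_ratio hε x y) (h.le_ratio hε x z) hxzp (by positivity)
    _ = Λ ^ 2 * ((ε / (anorm s (x - y) + ε)) ^ α * (ε / (anorm s (x - z) + ε)) ^ α) := by ring
    _ ≤ Λ ^ 2 * (2 ^ α * (ε / (anorm s (y - z) + ε)) ^ α) := by gcongr
    _ ≤ Λ ^ 2 * (2 ^ α * (Λ * R y z)) := by gcongr; exact h.ratio_le hΛ hε y z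
    _ = Λ ^ 3 * 2 ^ α * R y z := by ring

end Covariance

lemma SameCluster.symm {d K : ℕ} {s : Fin d → ℝ} {δ : ℝ} {x : Fin K → Fin d → ℝ} {i j : Fin K}
    (h : SameCluster s δ x i j) : SameCluster s δ x j i := by
  have : Std.Symm fun i j => anorm s (x i - x j) ≤ δ := ⟨fun i j hij => by
    rw [anorm_sub_comm]; exact hij⟩
  exact Relation.ReflTransGen.stdSymm.symm _ _ h

lemma SameCluster.anorm_le {d K : ℕ} {s : Fin d → ℝ} (hs : ∀ j, 1 ≤ s j) {δ : ℝ} (hδ : 0 ≤ δ)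
    {x : Fin K → Fin d → ℝ} {i j : Fin K} (h : SameCluster s δ x i j) :
    anorm s (x i - x j) ≤ K * δ := by
  let 𝒢 : SimpleGraph (Fin K) := SimpleGraph.fromRel fun i j => anorm s (x i - x j) ≤ δ
  have hadj : ∀ {a b}, 𝒢.Adj a b → anorm s (x a - x b) ≤ δ := by
    intro a b hab
    rcases (SimpleGraph.fromRel_adj _ _ _).1 hab with ⟨-, h | h⟩
    · exact h
    · rw [anorm_sub_comm]; exact h
  have hwalk : ∀ {a b} (p : 𝒢.Walk a b), anorm s (x a - x b) ≤ p.length * δ := by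
    intro a b p
    induction p with
    | nil => simp [anorm_zero hs]
    | @cons a b c hab p ih =>
      have := anorm_sub_le hs (x a) (x b) (x c)
      have := hadj hab
      simp only [SimpleGraph.Walk.length_cons]
      push_cast
      linarith
  have hreach : 𝒢.Reachable i j := by
    induction h with
    | refl => exact SimpleGraph.Reachable.refl i
    | @tail b c _ hbc ih =>
      by_cases hne : b = c
      · exact hne ▸ ih
      · exact ih.trans (SimpleGraph.Adj.reachable
          ((SimpleGraph.fromRel_adj _ _ _).2 ⟨hne, Or.inl hbc⟩))
  classical
  obtain ⟨p⟩ := hreach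
  have hlen := p.toPath.2.length_lt
  rw [Fintype.card_fin] at hlen
  refine (hwalk p.toPath.1).trans ?_
  gcongr

lemma CovBound.sameCluster_ge {d K : ℕ} {s : Fin d → ℝ} {α Λ ε : ℝ}
    {R : (Fin d → ℝ) → (Fin d → ℝ) → ℝ} (h : CovBound s α Λ ε R) (hs : ∀ j, 1 ≤ s j)
    (hα : 0 < α) (hΛ : 1 < Λ) (hε : 0 < ε) {x : Fin K → Fin d → ℝ} {i j : Fin K}
    (hij : SameCluster s ε x i j) : 1 ≤ Λ * (K + 1) ^ α * R (x i) (x j) := by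
  have h1 := h.ratio_le hΛ hε (x i) (x j)
  have h2 := hij.anorm_le hs hε.le
  have h0 := anorm_nonneg s (x i - x j)
  have h3 : ((K + 1 : ℝ)⁻¹) ^ α ≤ (ε / (anorm s (x i - x j) + ε)) ^ α := by
    refine Real.rpow_le_rpow (by positivity) ?_ hα.le
    rw [inv_eq_one_div, div_le_div_iff₀ (by positivity) (by positivity)]
    nlinarith
  rw [Real.inv_rpow (by positivity)] at h3
  have h4 := h3.trans h1
  rw [inv_le_iff_one_le_mul₀' (by positivity)] at h4
  linarith

/-- `exp (-∑_{i < j} R i j tᵢ tⱼ)`, the generating function of the Wick exponentials. -/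
def pairExp {K : ℕ} (R : Fin K → Fin K → ℝ) (t : Fin K → ℝ) : ℝ :=
  Real.exp (-(1 / 2) * ∑ i, ∑ j, (if i = j then 0 else R i j) * (t i * t j))

/-- The function `t^a |E|` of the covariance and of `t`. -/
def graphTerm {K : ℕ} (a : Fin K → ℕ) (E : Fin K → Fin K → ℕ) (R : Fin K → Fin K → ℝ)
    (t : Fin K → ℝ) : ℝ := (∏ j, t j ^ a j) * gval R E

/-- The functions `t^a |E|` with `deg E = n + a`. -/
def graphTerms {K : ℕ} (n : Fin K → ℕ) : Set ((Fin K → Fin K → ℝ) → (Fin K → ℝ) → ℝ) :=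
  {f | ∃ (a : Fin K → ℕ) (E : Fin K → Fin K → ℕ), IsMultigraph E ∧
    (∀ j, gdeg E j = n j + a j) ∧ f = graphTerm a E}

lemma hasDerivAt_update_apply {K : ℕ} (t : Fin K → ℝ) (i a : Fin K) :
    HasDerivAt (fun τ => Function.update t i τ a) (if a = i then 1 else 0) (t i) := by
  by_cases h : a = i
  · subst h
    simpa using hasDerivAt_id' (t a)
  · simpa [h] using hasDerivAt_const (t i) (t a)

lemma hasDerivAt_pairExp {K : ℕ} {R : Fin K → Fin K → ℝ} (hR : ∀ i j, R i j = R j i)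
    (t : Fin K → ℝ) (i : Fin K) :
    HasDerivAt (fun τ => pairExp R (Function.update t i τ))
      (-(∑ k ∈ Finset.univ.erase i, R i k * t k) * pairExp R t) (t i) := by
  have h := (HasDerivAt.fun_sum (u := Finset.univ) fun a _ =>
    HasDerivAt.fun_sum (u := Finset.univ) fun b _ =>
      ((hasDerivAt_update_apply t i a).mul (hasDerivAt_update_apply t i b)).const_mul
        (if a = b then 0 else R a b)).const_mul (-(1 / 2))
  refine h.exp.congr_deriv ?_
  simp only [Function.update_eq_self, Pi.mul_apply]
  rw [mul_comm]
  congr 1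
  have e1 : ∑ a, ∑ b, (if a = b then 0 else R a b) *
      ((if a = i then 1 else 0) * t b + t a * (if b = i then 1 else 0)) =
      (∑ b, (if i = b then 0 else R i b) * t b) + ∑ a, (if a = i then 0 else R a i) * t a := by
    simp only [mul_add, Finset.sum_add_distrib]
    congr 1
    · rw [Finset.sum_eq_single i]
      · simp
      · intro a _ ha
        simp [ha]
      · simp
    · refine Finset.sum_congr rfl fun a _ => ?_
      rw [Finset.sum_eq_single i]
      · simp
      · intro b _ hb
        simp [hb]
      · simp
  rw [e1]
  have e2 : ∑ a, (if a = i then 0 else R a i) * t a = ∑ b, (if i = b then 0 else R i b) * t b :=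
    Finset.sum_congr rfl fun a _ => by simp only [hR a i, eq_comm]
  have e3 : ∑ b, (if i = b then 0 else R i b) * t b = ∑ k ∈ Finset.univ.erase i, R i k * t k := by
    rw [← Finset.add_sum_erase _ _ (Finset.mem_univ i)]
    simp only [if_true, zero_mul, zero_add]
    refine Finset.sum_congr rfl fun k hk => ?_
    rw [if_neg (Finset.ne_of_mem_erase hk).symm]
  rw [e2, e3]
  ring

lemma prod_pow_update_succ {K : ℕ} (t : Fin K → ℝ) (a : Fin K → ℕ) (k : Fin K) :
    ∏ j, t j ^ (Function.update a k (a k + 1)) j = t k * ∏ j, t j ^ a j := by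
  rw [← Finset.mul_prod_erase _ _ (Finset.mem_univ k),
    ← Finset.mul_prod_erase _ (fun j => t j ^ a j) (Finset.mem_univ k), Function.update_self,
    pow_succ', mul_assoc]
  congr 2
  exact Finset.prod_congr rfl fun j hj => by
    rw [Function.update_of_ne (Finset.ne_of_mem_erase hj)]

lemma hasDerivAt_prod_pow {K : ℕ} (t : Fin K → ℝ) (a : Fin K → ℕ) (i : Fin K) :
    HasDerivAt (fun τ => ∏ j, Function.update t i τ j ^ a j)
      (a i * ∏ j, t j ^ (Function.update a i (a i - 1)) j) (t i) := by
  have e : (fun τ => ∏ j, Function.update t i τ j ^ a j) =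
      fun τ => τ ^ a i * ∏ j ∈ Finset.univ.erase i, t j ^ a j := by
    funext τ
    rw [← Finset.mul_prod_erase _ _ (Finset.mem_univ i), Function.update_self]
    congr 1
    exact Finset.prod_congr rfl fun j hj => by
      rw [Function.update_of_ne (Finset.ne_of_mem_erase hj)]
  rw [e]
  refine ((hasDerivAt_pow (a i) (t i)).mul_const _).congr_deriv ?_
  rw [← Finset.mul_prod_erase _ (fun j => t j ^ (Function.update a i (a i - 1)) j)
    (Finset.mem_univ i), Function.update_self, mul_assoc]
  congr 2
  exact Finset.prod_congr rfl fun j hj => by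
    rw [Function.update_of_ne (Finset.ne_of_mem_erase hj)]

lemma exists_hasDerivAt_graphTerm_mul_pairExp {K : ℕ} (n : Fin K → ℕ) (i : Fin K)
    {a : Fin K → ℕ} {E : Fin K → Fin K → ℕ} (hE : IsMultigraph E)
    (hdeg : ∀ j, gdeg E j = n j + a j) :
    ∃ q ∈ Submodule.span ℝ (graphTerms (Function.update n i (n i + 1))),
      ∀ R : Fin K → Fin K → ℝ, (∀ i j, R i j = R j i) → ∀ t : Fin K → ℝ,
        HasDerivAt (fun τ => graphTerm a E R (Function.update t i τ) *
          pairExp R (Function.update t i τ)) (q R t * pairExp R t) (t i) := by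
  have hmem₁ : (a i : ℝ) • graphTerm (Function.update a i (a i - 1)) E ∈
      Submodule.span ℝ (graphTerms (Function.update n i (n i + 1))) := by
    rcases Nat.eq_zero_or_pos (a i) with h0 | h0
    · rw [h0, Nat.cast_zero, zero_smul]
      exact Submodule.zero_mem _
    · refine Submodule.smul_mem _ _ (Submodule.subset_span ⟨_, E, hE, fun j => ?_, rfl⟩)
      rw [hdeg j]
      by_cases hj : j = i
      · subst hj
        simp only [Function.update_self]
        omega
      · simp [hj]
  have hmem₂ : ∑ k ∈ Finset.univ.erase i,
      graphTerm (Function.update a k (a k + 1)) (E + singleEdge i k) ∈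
      Submodule.span ℝ (graphTerms (Function.update n i (n i + 1))) := by
    refine Submodule.sum_mem _ fun k hk => Submodule.subset_span ?_
    have hki : i ≠ k := (Finset.ne_of_mem_erase hk).symm
    refine ⟨_, _, isMultigraph_add_singleEdge hE hki, fun j => ?_, rfl⟩
    rw [gdeg_add, gdeg_singleEdge hki, hdeg j]
    simp only [Function.update_apply]
    grind
  refine ⟨_, Submodule.sub_mem _ hmem₁ hmem₂, fun R hR t => ?_⟩
  have h := ((hasDerivAt_prod_pow t a i).mul_const (gval R E)).mul (hasDerivAt_pairExp hR t i)
  refine h.congr_deriv ?_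
  simp only [Function.update_eq_self, Pi.sub_apply, Pi.smul_apply, Finset.sum_apply, smul_eq_mul]
  have e : ∑ k ∈ Finset.univ.erase i,
      graphTerm (Function.update a k (a k + 1)) (E + singleEdge i k) R t =
      (∏ j, t j ^ a j) * gval R E * ∑ k ∈ Finset.univ.erase i, R i k * t k := by
    rw [Finset.mul_sum]
    refine Finset.sum_congr rfl fun k hk => ?_
    rw [graphTerm, prod_pow_update_succ,
      gval_add_singleEdge hR E (Finset.ne_of_mem_erase hk).symm]
    ring
  rw [e, graphTerm]
  ring

lemma exists_hasDerivAt_mul_pairExp {K : ℕ} (n : Fin K → ℕ) (i : Fin K)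
    {p : (Fin K → Fin K → ℝ) → (Fin K → ℝ) → ℝ} (hp : p ∈ Submodule.span ℝ (graphTerms n)) :
    ∃ q ∈ Submodule.span ℝ (graphTerms (Function.update n i (n i + 1))),
      ∀ R : Fin K → Fin K → ℝ, (∀ i j, R i j = R j i) → ∀ t : Fin K → ℝ,
        HasDerivAt (fun τ => p R (Function.update t i τ) * pairExp R (Function.update t i τ))
          (q R t * pairExp R t) (t i) := by
  induction hp using Submodule.span_induction with
  | mem f hf =>
    obtain ⟨a, E, hE, hdeg, rfl⟩ := hf
    exact exists_hasDerivAt_graphTerm_mul_pairExp n i hE hdeg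
  | zero =>
    refine ⟨0, Submodule.zero_mem _, fun R _ t => ?_⟩
    simpa using hasDerivAt_const (t i) (0 : ℝ)
  | add f g _ _ hf hg =>
    obtain ⟨q₁, hq₁, h₁⟩ := hf
    obtain ⟨q₂, hq₂, h₂⟩ := hg
    refine ⟨q₁ + q₂, Submodule.add_mem _ hq₁ hq₂, fun R hR t => ?_⟩
    simpa only [Pi.add_apply, add_mul] using (h₁ R hR t).fun_add (h₂ R hR t)
  | smul c f _ hf =>
    obtain ⟨q, hq, h⟩ := hf
    refine ⟨c • q, Submodule.smul_mem _ c hq, fun R hR t => ?_⟩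
    simpa only [Pi.smul_apply, smul_eq_mul, mul_assoc] using (h R hR t).const_mul c

/-- A family of functions closed under partial differentiation that starts from `pairExp R`
consists of products of `pairExp R` with combinations of graph terms, uniformly in `R`. -/
lemma exists_mem_span_graphTerms {K : ℕ} (n : Fin K → ℕ) :
    ∃ p ∈ Submodule.span ℝ (graphTerms n), ∀ R : Fin K → Fin K → ℝ, (∀ i j, R i j = R j i) →
      ∀ H : (Fin K → ℕ) → (Fin K → ℝ) → ℂ, (∀ t, H 0 t = pairExp R t) →
      (∀ n t i, HasDerivAt (fun τ => H n (Function.update t i τ))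
        (H (Function.update n i (n i + 1)) t) (t i)) →
      ∀ t, H n t = (p R t * pairExp R t : ℝ) := by
  induction hN : ∑ i, n i generalizing n with
  | zero =>
    have hn : n = 0 := by
      funext i
      exact Finset.sum_eq_zero_iff.1 hN i (Finset.mem_univ i)
    subst hn
    refine ⟨graphTerm 0 0, Submodule.subset_span
      ⟨0, 0, ⟨by simp, by simp⟩, by simp [gdeg], rfl⟩, fun R _ H h0 _ t => ?_⟩
    simp [h0, gval, graphTerm]
  | succ N ih =>
    obtain ⟨i, hi⟩ : ∃ i, n i ≠ 0 := by
      by_contra! h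
      simp [h] at hN
    set n' := Function.update n i (n i - 1) with hn'
    have hn : Function.update n' i (n' i + 1) = n := by
      simp only [hn', Function.update_self, Function.update_idem]
      rw [Nat.sub_add_cancel (by omega), Function.update_eq_self]
    have hsum : ∑ j, n' j = N := by
      rw [← Finset.add_sum_erase _ _ (Finset.mem_univ i)] at hN ⊢
      have : ∑ j ∈ Finset.univ.erase i, n' j = ∑ j ∈ Finset.univ.erase i, n j :=
        Finset.sum_congr rfl fun j hj => by
          rw [hn', Function.update_of_ne (Finset.ne_of_mem_erase hj)]
      rw [this, hn', Function.update_self]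
      omega
    obtain ⟨p, hp, hpH⟩ := ih n' hsum
    obtain ⟨q, hq, hqd⟩ := exists_hasDerivAt_mul_pairExp n' i hp
    rw [hn] at hq
    refine ⟨q, hq, fun R hR H h0 hH t => ?_⟩
    have h1 := hH n' t i
    rw [hn] at h1
    simp only [hpH R hR H h0 hH] at h1
    exact h1.unique (hqd R hR t).ofReal_comp

section Moments

variable {Ω : Type*} [MeasurableSpace Ω] {P : Measure Ω}

/-- All moments of `Y` are finite. -/
def HasMoments (P : Measure Ω) (Y : Ω → ℂ) : Prop := ∀ p : ℕ, MemLp Y p P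

lemma HasMoments.integrable {Y : Ω → ℂ} (hY : HasMoments P Y) : Integrable Y P :=
  memLp_one_iff_integrable.1 (by exact_mod_cast hY 1)

lemma HasMoments.mul {Y Z : Ω → ℂ} (hY : HasMoments P Y) (hZ : HasMoments P Z) :
    HasMoments P fun ω => Y ω * Z ω := by
  intro p
  have : ENNReal.HolderTriple ((2 * p : ℕ) : ENNReal) ((2 * p : ℕ) : ENNReal) (p : ENNReal) := by
    constructor
    push_cast
    rw [ENNReal.mul_inv (by simp) (by simp), ← add_mul, ENNReal.inv_two_add_inv_two, one_mul]
  exact (hZ (2 * p)).mul' (hY (2 * p))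

lemma HasMoments.add {Y Z : Ω → ℂ} (hY : HasMoments P Y) (hZ : HasMoments P Z) :
    HasMoments P fun ω => Y ω + Z ω := fun p => (hY p).add (hZ p)

lemma HasMoments.sub {Y Z : Ω → ℂ} (hY : HasMoments P Y) (hZ : HasMoments P Z) :
    HasMoments P fun ω => Y ω - Z ω := fun p => (hY p).sub (hZ p)

lemma hasMoments_const [IsProbabilityMeasure P] (c : ℂ) : HasMoments P fun _ => c :=
  fun _ => memLp_const c

lemma HasMoments.pow [IsProbabilityMeasure P] {Y : Ω → ℂ} (hY : HasMoments P Y) (k : ℕ) :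
    HasMoments P fun ω => Y ω ^ k := by
  induction k with
  | zero => simpa using hasMoments_const (P := P) 1
  | succ k ih => simpa only [pow_succ] using ih.mul hY

lemma HasMoments.sum {ι : Type*} (A : Finset ι) {Y : ι → Ω → ℂ}
    (hY : ∀ i ∈ A, HasMoments P (Y i)) : HasMoments P fun ω => ∑ i ∈ A, Y i ω :=
  fun p => memLp_finsetSum A fun i hi => hY i hi p

lemma HasMoments.prod [IsProbabilityMeasure P] {ι : Type*} (A : Finset ι) {Y : ι → Ω → ℂ}
    (hY : ∀ i ∈ A, HasMoments P (Y i)) : HasMoments P fun ω => ∏ i ∈ A, Y i ω := by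
  classical
  induction A using Finset.induction_on with
  | empty => simpa using hasMoments_const (P := P) 1
  | insert i A hi ih =>
    simp only [Finset.prod_insert hi]
    exact (hY i (Finset.mem_insert_self i A)).mul
      (ih fun j hj => hY j (Finset.mem_insert_of_mem hj))

variable [IsProbabilityMeasure P] {X : Ω → ℝ}

lemma hasMoments_hermiteAux {Y : Ω → ℂ} (hY : HasMoments P Y) (a : ℂ) (n : ℕ) :
    HasMoments P fun ω => hermiteAux a (Y ω) n := by
  induction n using Nat.strong_induction_on with
  | _ n ih =>
    match n with
    | 0 => simpa only [hermiteAux] using hasMoments_const (P := P) 1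
    | 1 => simpa only [hermiteAux] using hY
    | n + 2 =>
      simp only [hermiteAux]
      exact (hY.mul (ih (n + 1) (by omega))).add
        ((hasMoments_const _).mul (ih n (by omega)))

lemma norm_exp_quadratic (a x t : ℝ) :
    ‖Complex.exp (Complex.I * x * t + a * t ^ 2 / 2)‖ = Real.exp (a * t ^ 2 / 2) := by
  have e : Complex.I * x * t + a * t ^ 2 / 2 =
      ((a * t ^ 2 / 2 : ℝ) : ℂ) + ((x * t : ℝ) : ℂ) * Complex.I := by
    push_cast; ring
  rw [e, Complex.norm_exp]
  simp [-Complex.ofReal_mul, -Complex.ofReal_div, -Complex.ofReal_pow]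

lemma hasMoments_gaussExp (hX : HasMoments P fun ω => (X ω : ℂ)) (a : ℝ) (n : ℕ) (t : ℝ) :
    HasMoments P fun ω => gaussExp a (Complex.I * X ω) n t := by
  have hexp : HasMoments P fun ω => Complex.exp (Complex.I * X ω * t + a * t ^ 2 / 2) := by
    intro p
    have hm : AEStronglyMeasurable (fun ω => (X ω : ℂ)) P := (hX 1).1
    refine MemLp.of_bound ?_ (Real.exp (a * t ^ 2 / 2)) (ae_of_all _ fun ω => ?_)
    · exact (show Continuous fun z : ℂ => Complex.exp (Complex.I * z * t + a * t ^ 2 / 2) by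
        fun_prop).comp_aestronglyMeasurable hm
    · exact (norm_exp_quadratic a (X ω) t).le
  exact (hasMoments_hermiteAux (((hasMoments_const _).mul hX).add (hasMoments_const _)) _ _).mul
    hexp

lemma hasDerivAt_integral_mul_gaussExp (hX : HasMoments P fun ω => (X ω : ℂ)) {a : ℝ}
    (ha : 0 ≤ a) {Y : Ω → ℂ} (hY : HasMoments P Y) (n : ℕ) (t : ℝ) :
    HasDerivAt (fun t => ∫ ω, Y ω * gaussExp a (Complex.I * X ω) n t ∂P)
      (∫ ω, Y ω * gaussExp a (Complex.I * X ω) (n + 1) t ∂P) t := by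
  set c : ℝ := 1 + a * (|t| + 1)
  set B : ℝ := (n + 1).factorial * (1 + a) ^ (n + 1) * Real.exp (a * (|t| + 1) ^ 2 / 2)
  have hbound : Integrable (fun ω => ‖Y ω * (B * (c + (|X ω| : ℝ)) ^ (n + 1))‖) P := by
    have habs : HasMoments P fun ω => ((|X ω| : ℝ) : ℂ) := by
      intro p
      have := (hX p).norm.ofReal (K := ℂ)
      simpa using this
    exact (hY.mul ((hasMoments_const (B : ℂ)).mul
      (((hasMoments_const (c : ℂ)).add habs).pow (n + 1)))).integrable.norm
  refine (hasDerivAt_integral_of_dominated_loc_of_deriv_le (Metric.ball_mem_nhds t one_pos)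
    (.of_forall fun s => (hY.mul (hasMoments_gaussExp hX a n s)).integrable.1)
    (hY.mul (hasMoments_gaussExp hX a n t)).integrable
    (hY.mul (hasMoments_gaussExp hX a (n + 1) t)).integrable.1
    (ae_of_all _ fun ω s hs => ?_) hbound
    (ae_of_all _ fun ω s _ => (hasDerivAt_gaussExp _ _ n s).const_mul (Y ω))).2
  have hst : |s| ≤ |t| + 1 := by
    have h1 : |s - t| < 1 := by simpa [Real.dist_eq] using hs
    have h2 := abs_sub_abs_le_abs_sub s t
    linarith
  have hc : 0 ≤ c + |X ω| := by positivity
  have e : ‖(B : ℂ) * ((c : ℂ) + ((|X ω| : ℝ) : ℂ)) ^ (n + 1)‖ = B * (c + |X ω|) ^ (n + 1) := by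
    rw [← Complex.ofReal_add, ← Complex.ofReal_pow, ← Complex.ofReal_mul, Complex.norm_real,
      Real.norm_of_nonneg (by positivity)]
  rw [norm_mul, norm_mul (Y ω), e]
  refine mul_le_mul_of_nonneg_left ?_ (norm_nonneg _)
  rw [gaussExp, norm_mul, norm_exp_quadratic]
  have h1 := norm_hermiteAux_le (a := (a : ℂ)) (A := a) (by simp [abs_of_nonneg ha])
    (Complex.I * X ω + a * s) (n + 1)
  have h2 : 1 + ‖Complex.I * X ω + a * s‖ ≤ c + |X ω| := by
    have := norm_add_le (Complex.I * X ω) ((a : ℂ) * s)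
    simp only [norm_mul, Complex.norm_I, one_mul, Complex.norm_real, Real.norm_eq_abs,
      abs_of_nonneg ha] at this
    have : a * |s| ≤ a * (|t| + 1) := by gcongr
    simp only [c]
    linarith
  have h3 : s ^ 2 ≤ (|t| + 1) ^ 2 := by
    rw [← sq_abs]
    gcongr
  calc _ ≤ ((n + 1).factorial * (1 + a) ^ (n + 1) * (1 + ‖Complex.I * X ω + a * s‖) ^ (n + 1)) *
        Real.exp (a * s ^ 2 / 2) := by gcongr
    _ ≤ ((n + 1).factorial * (1 + a) ^ (n + 1) * (c + |X ω|) ^ (n + 1)) *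
        Real.exp (a * (|t| + 1) ^ 2 / 2) := by gcongr
    _ = B * (c + |X ω|) ^ (n + 1) := by simp only [B]; ring

lemma hasMoments_taylorRem_gaussExp (hX : HasMoments P fun ω => (X ω : ℂ)) (a : ℝ) (q k : ℕ)
    (t : ℝ) : HasMoments P fun ω => taylorRem (gaussExp a (Complex.I * X ω)) q k t :=
  (hasMoments_gaussExp hX a k t).sub (HasMoments.sum _ fun n _ =>
    (hasMoments_const _).mul (hasMoments_gaussExp hX a (k + n) 0))

lemma hasMoments_iteratedDeriv_hFun (hX : HasMoments P fun ω => (X ω : ℂ)) {a : ℝ} (ha : 0 < a)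
    (m r : ℕ) (θ : ℝ) :
    HasMoments P fun ω => iteratedDeriv r (fun t => hFun m t (X ω) a) θ := by
  simp only [iteratedDeriv_hFun ha]
  exact HasMoments.sum _ fun k _ =>
    (hasMoments_const _).mul (hasMoments_taylorRem_gaussExp hX a (m - k) k θ)

lemma integral_mul_taylorRem_gaussExp (hX : HasMoments P fun ω => (X ω : ℂ)) (a : ℝ)
    {Y : Ω → ℂ} (hY : HasMoments P Y) (q k : ℕ) (t : ℝ) :
    ∫ ω, Y ω * taylorRem (gaussExp a (Complex.I * X ω)) q k t ∂P =
      taylorRem (fun n t => ∫ ω, Y ω * gaussExp a (Complex.I * X ω) n t ∂P) q k t := by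
  simp only [taylorRem, mul_sub, Finset.mul_sum, mul_left_comm (Y _)]
  have hg := fun n t => (hY.mul (hasMoments_gaussExp hX a n t)).integrable
  rw [integral_sub (hg k t) (integrable_finsetSum _ fun n _ => (hg _ _).const_mul _),
    integral_finsetSum _ fun n _ => (hg _ _).const_mul _]
  simp only [integral_const_mul]

lemma norm_integral_mul_iteratedDeriv_hFun_le (hX : HasMoments P fun ω => (X ω : ℂ)) {a : ℝ}
    (ha : 0 < a) {Y : Ω → ℂ} (hY : HasMoments P Y) {m r : ℕ} {θ M : ℝ}
    (hM : ∀ n, m ≤ n → n ≤ m + r → ∀ t ∈ Set.uIcc 0 θ,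
      ‖∫ ω, Y ω * gaussExp a (Complex.I * X ω) n t ∂P‖ ≤ M) :
    ‖∫ ω, Y ω * iteratedDeriv r (fun t => hFun m t (X ω) a) θ ∂P‖ ≤
      (∑ k ∈ Finset.range (r + 1), r.choose k * ‖gaussExp (-a) 0 (r - k) θ‖ * |θ| ^ (m - k))
        * M := by
  have hInt := fun k => (hY.mul (hasMoments_taylorRem_gaussExp hX a (m - k) k θ)).integrable
  simp only [iteratedDeriv_hFun ha, Finset.mul_sum, mul_left_comm (Y _)]
  rw [integral_finsetSum _ fun k _ => (hInt k).const_mul _, Finset.sum_mul]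
  refine (norm_sum_le _ _).trans (Finset.sum_le_sum fun k hk => ?_)
  rw [integral_const_mul, integral_mul_taylorRem_gaussExp hX a hY, norm_mul, norm_mul,
    Complex.norm_natCast, mul_assoc (_ * _) (_ ^ _)]
  have hk' : k ≤ r := Nat.lt_succ_iff.1 (Finset.mem_range.1 hk)
  refine mul_le_mul_of_nonneg_left ?_ (by positivity)
  exact norm_taylorRem_le (hasDerivAt_integral_mul_gaussExp hX ha.le hY) (m - k) k
    (hM (k + (m - k)) (by omega) (by omega)) θ Set.right_mem_uIcc

end Moments

lemma norm_gaussExp_neg_le {a Λ : ℝ} (hΛ : 1 < Λ) (ha : Λ⁻¹ ≤ a) (ha' : a ≤ Λ) (q : ℕ) (θ : ℝ) :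
    ‖gaussExp (-a) 0 q θ‖ ≤
      q.factorial * (1 + Λ) ^ (2 * q) * (1 + |θ|) ^ q * Real.exp (-(θ ^ 2) / (2 * Λ)) := by
  have hΛ0 : 0 < Λ := by linarith
  have ha0 : 0 < a := (inv_pos.2 hΛ0).trans_le ha
  have hy : ‖(0 : ℂ) + -a * θ‖ ≤ Λ * |θ| := by
    rw [zero_add, norm_mul, norm_neg, Complex.norm_real, Complex.norm_real, Real.norm_eq_abs,
      Real.norm_eq_abs, abs_of_pos ha0]
    gcongr
  have h1 := norm_hermiteAux_le (a := -(a : ℂ)) (A := Λ)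
    (by rw [norm_neg, Complex.norm_real, Real.norm_eq_abs, abs_of_pos ha0]; exact ha')
    (0 + -a * θ) q
  have h2 : ‖Complex.exp (0 * θ + -a * θ ^ 2 / 2)‖ ≤ Real.exp (-(θ ^ 2) / (2 * Λ)) := by
    have e : (0 : ℂ) * θ + -a * θ ^ 2 / 2 = ((-a * θ ^ 2 / 2 : ℝ) : ℂ) := by push_cast; ring
    rw [e, Complex.norm_exp, Complex.ofReal_re, Real.exp_le_exp]
    have : Λ⁻¹ * θ ^ 2 ≤ a * θ ^ 2 := by gcongr
    have e2 : -(θ ^ 2) / (2 * Λ) = -(Λ⁻¹ * θ ^ 2) / 2 := by field_simp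
    rw [e2]
    linarith
  have h3 : 1 + Λ * |θ| ≤ (1 + Λ) * (1 + |θ|) := by nlinarith [abs_nonneg θ]
  rw [gaussExp, norm_mul]
  calc _ ≤ (q.factorial * (1 + Λ) ^ q * (1 + ‖(0 : ℂ) + -a * θ‖) ^ q) *
        Real.exp (-(θ ^ 2) / (2 * Λ)) := by gcongr
    _ ≤ (q.factorial * (1 + Λ) ^ q * ((1 + Λ) * (1 + |θ|)) ^ q) *
        Real.exp (-(θ ^ 2) / (2 * Λ)) := by gcongr; linarith
    _ = _ := by rw [mul_pow, mul_comm 2 q, pow_mul]; ring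

lemma exists_sum_norm_gaussExp_le {Λ : ℝ} (hΛ : 1 < Λ) (m r : ℕ) :
    ∃ C ≥ 0, ∀ a θ : ℝ, Λ⁻¹ ≤ a → a ≤ Λ →
      ∑ k ∈ Finset.range (r + 1), r.choose k * ‖gaussExp (-a) 0 (r - k) θ‖ * |θ| ^ (m - k) ≤
        C * (1 + |θ|) ^ (r + m) * Real.exp (-(θ ^ 2) / (2 * Λ)) := by
  have hΛ0 : 0 < Λ := by linarith
  refine ⟨∑ k ∈ Finset.range (r + 1), r.choose k * ((r - k).factorial * (1 + Λ) ^ (2 * (r - k))),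
    Finset.sum_nonneg fun k _ => by positivity, fun a θ ha ha' => ?_⟩
  rw [Finset.sum_mul, Finset.sum_mul]
  refine Finset.sum_le_sum fun k _ => ?_
  have h1 : |θ| ^ (m - k) ≤ (1 + |θ|) ^ (m - k) := by gcongr; linarith
  have h2 : (1 + |θ|) ^ ((r - k) + (m - k)) ≤ (1 + |θ|) ^ (r + m) := by
    gcongr
    · linarith [abs_nonneg θ]
    · omega
    · omega
  calc r.choose k * ‖gaussExp (-a) 0 (r - k) θ‖ * |θ| ^ (m - k)
      ≤ r.choose k * ((r - k).factorial * (1 + Λ) ^ (2 * (r - k)) * (1 + |θ|) ^ (r - k) *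
        Real.exp (-(θ ^ 2) / (2 * Λ))) * (1 + |θ|) ^ (m - k) := by
        gcongr
        exact norm_gaussExp_neg_le hΛ ha ha' _ _
    _ = r.choose k * ((r - k).factorial * (1 + Λ) ^ (2 * (r - k))) *
        (1 + |θ|) ^ ((r - k) + (m - k)) * Real.exp (-(θ ^ 2) / (2 * Λ)) := by
        rw [pow_add]; ring
    _ ≤ _ := by gcongr

section GaussianVector

variable {Ω : Type*} [MeasurableSpace Ω] {P : Measure Ω} {K : ℕ}
  {X : Fin K → Ω → ℝ}

lemma IsCenteredGaussianFamily.map_sum_eq {ι : Type*} {Φ : ι → Ω → ℝ}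
    (hΦ : IsCenteredGaussianFamily P Φ) (x : Fin K → ι) (t : Fin K → ℝ) :
    ∃ v : NNReal, Measure.map (fun ω => ∑ j, t j * Φ (x j) ω) P = gaussianReal 0 v := by
  classical
  obtain ⟨v, hv⟩ := hΦ (Finset.univ.image x) fun y => ∑ j with x j = y, t j
  refine ⟨v, ?_⟩
  rw [← hv]
  congr 1
  funext ω
  rw [← Finset.sum_fiberwise_of_maps_to (t := Finset.univ.image x) (g := x)
    fun j _ => Finset.mem_image_of_mem x (Finset.mem_univ j)]
  refine Finset.sum_congr rfl fun y _ => ?_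
  rw [Finset.sum_mul]
  refine Finset.sum_congr rfl fun j hj => ?_
  rw [(Finset.mem_filter.1 hj).2]

lemma memLp_of_map_eq_gaussianReal {Y : Ω → ℝ} {v : NNReal}
    (h : Measure.map Y P = gaussianReal 0 v) (p : ℕ) : MemLp Y p P := by
  have hm : AEMeasurable Y P :=
    AEMeasurable.of_map_ne_zero (by rw [h]; exact IsProbabilityMeasure.ne_zero _)
  have h1 : MemLp id (p : ENNReal) (Measure.map Y P) := by
    rw [h]
    exact_mod_cast memLp_id_gaussianReal (p : NNReal)
  exact (memLp_map_measure_iff h1.1 hm).1 h1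

lemma integral_exp_of_map_eq_gaussianReal {Y : Ω → ℝ} {v : NNReal}
    (h : Measure.map Y P = gaussianReal 0 v) :
    ∫ ω, Complex.exp (Complex.I * Y ω) ∂P = Complex.exp (((-(∫ ω, Y ω ^ 2 ∂P) / 2 : ℝ) : ℂ)) := by
  have hm : AEMeasurable Y P :=
    AEMeasurable.of_map_ne_zero (by rw [h]; exact IsProbabilityMeasure.ne_zero _)
  have hv : ∫ ω, Y ω ^ 2 ∂P = v := by
    have h1 := variance_fun_id_gaussianReal (μ := 0) (v := v)
    rw [variance_eq_integral (by fun_prop), integral_id_gaussianReal, ← h,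
      integral_map hm (by fun_prop)] at h1
    simpa using h1
  have h2 := charFun_gaussianReal (μ := 0) (v := v) 1
  rw [← h, charFun_apply_real, integral_map hm (by fun_prop)] at h2
  rw [hv]
  simp only [Complex.ofReal_one, one_mul, mul_comm _ Complex.I] at h2
  rw [h2]
  congr 1
  push_cast
  ring

lemma memLp_of_forall_map_sum
    (hX : ∀ t : Fin K → ℝ, ∃ v : NNReal,
      Measure.map (fun ω => ∑ j, t j * X j ω) P = gaussianReal 0 v) (j : Fin K) (p : ℕ) :
    MemLp (X j) p P := by
  obtain ⟨v, hv⟩ := hX (Pi.single j 1)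
  have e : (fun ω => ∑ i, (Pi.single j 1 : Fin K → ℝ) i * X i ω) = X j := by
    funext ω
    simp [Pi.single_apply]
  rw [e] at hv
  exact memLp_of_map_eq_gaussianReal hv p

lemma integral_prod_gaussExp_zero
    (hX : ∀ t : Fin K → ℝ, ∃ v : NNReal,
      Measure.map (fun ω => ∑ j, t j * X j ω) P = gaussianReal 0 v) (t : Fin K → ℝ) :
    ∫ ω, ∏ j, gaussExp (∫ ω', X j ω' ^ 2 ∂P : ℝ) (Complex.I * X j ω) 0 (t j) ∂P =
      pairExp (fun i j => ∫ ω, X i ω * X j ω ∂P) t := by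
  obtain ⟨v, hv⟩ := hX t
  have hmem : ∀ j, MemLp (X j) 2 P := fun j => by
    exact_mod_cast memLp_of_forall_map_sum hX j 2
  have hInt : ∀ i j, Integrable (fun ω => X i ω * X j ω) P := fun i j =>
    (hmem i).integrable_mul (hmem j)
  have hsq : ∫ ω, (∑ j, t j * X j ω) ^ 2 ∂P =
      ∑ i, ∑ j, t i * t j * ∫ ω, X i ω * X j ω ∂P := by
    have e : ∀ ω, (∑ j, t j * X j ω) ^ 2 = ∑ i, ∑ j, t i * t j * (X i ω * X j ω) := by
      intro ω
      rw [sq, Finset.sum_mul_sum]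
      exact Finset.sum_congr rfl fun i _ => Finset.sum_congr rfl fun j _ => by ring
    simp only [e]
    rw [integral_finsetSum _ fun i _ => integrable_finsetSum _ fun j _ => (hInt i j).const_mul _]
    refine Finset.sum_congr rfl fun i _ => ?_
    rw [integral_finsetSum _ fun j _ => (hInt i j).const_mul _]
    exact Finset.sum_congr rfl fun j _ => integral_const_mul _ _
  have hprod : ∀ ω, ∏ j, gaussExp (∫ ω', X j ω' ^ 2 ∂P : ℝ) (Complex.I * X j ω) 0 (t j) =
      Complex.exp ((∑ j, (∫ ω', X j ω' ^ 2 ∂P) * t j ^ 2 / 2 : ℝ) : ℂ) *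
        Complex.exp (Complex.I * (∑ j, t j * X j ω : ℝ)) := by
    intro ω
    simp only [gaussExp, hermiteAux, one_mul]
    rw [← Complex.exp_sum, ← Complex.exp_add]
    congr 1
    push_cast
    rw [Finset.mul_sum, ← Finset.sum_add_distrib]
    exact Finset.sum_congr rfl fun j _ => by ring
  simp only [hprod]
  rw [integral_const_mul, integral_exp_of_map_eq_gaussianReal hv, hsq, ← Complex.exp_add,
    ← Complex.ofReal_add, ← Complex.ofReal_exp, pairExp]
  congr 2
  have e : ∀ i, ∑ j, (if i = j then 0 else ∫ ω, X i ω * X j ω ∂P) * (t i * t j) =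
      (∑ j, t i * t j * ∫ ω, X i ω * X j ω ∂P) - (∫ ω', X i ω' ^ 2 ∂P) * t i ^ 2 := by
    intro i
    rw [eq_sub_iff_add_eq, ← Finset.add_sum_erase _ _ (Finset.mem_univ i),
      ← Finset.add_sum_erase _ (fun j => t i * t j * ∫ ω, X i ω * X j ω ∂P) (Finset.mem_univ i)]
    have : ∑ j ∈ Finset.univ.erase i, (if i = j then 0 else ∫ ω, X i ω * X j ω ∂P) * (t i * t j)
        = ∑ j ∈ Finset.univ.erase i, t i * t j * ∫ ω, X i ω * X j ω ∂P :=
      Finset.sum_congr rfl fun j hj => by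
        rw [if_neg (Finset.ne_of_mem_erase hj).symm]
        ring
    rw [this]
    simp only [if_true, ← sq]
    ring
  simp only [e, Finset.sum_sub_distrib, ← Finset.sum_div]
  ring

variable [IsProbabilityMeasure P]

lemma hasDerivAt_integral_prod_gaussExp (hX : ∀ j, HasMoments P fun ω => (X j ω : ℂ))
    {a : Fin K → ℝ} (ha : ∀ j, 0 ≤ a j) (n : Fin K → ℕ) (t : Fin K → ℝ) (i : Fin K) :
    HasDerivAt (fun τ => ∫ ω, ∏ j, gaussExp (a j) (Complex.I * X j ω) (n j)
        (Function.update t i τ j) ∂P)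
      (∫ ω, ∏ j, gaussExp (a j) (Complex.I * X j ω) (Function.update n i (n i + 1) j) (t j) ∂P)
      (t i) := by
  have h := hasDerivAt_integral_mul_gaussExp (hX i) (ha i)
    (HasMoments.prod (Finset.univ.erase i) fun j _ => hasMoments_gaussExp (hX j) (a j) (n j) (t j))
    (n i) (t i)
  convert h using 1
  · funext τ
    congr 1
    funext ω
    rw [← Finset.prod_erase_mul _ _ (Finset.mem_univ i), Function.update_self]
    congr 1
    exact Finset.prod_congr rfl fun j hj => by
      rw [Function.update_of_ne (Finset.ne_of_mem_erase hj)]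
  · congr 1
    funext ω
    rw [← Finset.prod_erase_mul _ _ (Finset.mem_univ i), Function.update_self]
    congr 1
    exact Finset.prod_congr rfl fun j hj => by
      rw [Function.update_of_ne (Finset.ne_of_mem_erase hj)]

lemma norm_integral_prod_ite_le (hX : ∀ j, HasMoments P fun ω => (X j ω : ℂ))
    {a : Fin K → ℝ} (ha : ∀ j, 0 < a j) {m r : ℕ} {θ M W : ℝ}
    (hW : ∀ j, ∑ k ∈ Finset.range (r + 1),
      r.choose k * ‖gaussExp (-a j) 0 (r - k) θ‖ * |θ| ^ (m - k) ≤ W)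
    (hM : ∀ (n : Fin K → ℕ) (t : Fin K → ℝ), (∀ j, m ≤ n j ∧ n j ≤ m + r) →
      (∀ j, t j ∈ Set.uIcc 0 θ) →
      ‖∫ ω, ∏ j, gaussExp (a j) (Complex.I * X j ω) (n j) (t j) ∂P‖ ≤ M)
    (S : Finset (Fin K)) (n : Fin K → ℕ) (t : Fin K → ℝ) (hn : ∀ j, m ≤ n j ∧ n j ≤ m + r)
    (ht : ∀ j, t j ∈ Set.uIcc 0 θ) :
    ‖∫ ω, ∏ j, (if j ∈ S then iteratedDeriv r (fun t => hFun m t (X j ω) (a j)) θ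
      else gaussExp (a j) (Complex.I * X j ω) (n j) (t j)) ∂P‖ ≤ W ^ S.card * M := by
  induction S using Finset.induction_on generalizing n t with
  | empty => simpa using hM n t hn ht
  | insert i S hi ih =>
    set F : (Fin K → ℕ) → (Fin K → ℝ) → Fin K → Ω → ℂ := fun n t j ω =>
      if j ∈ S then iteratedDeriv r (fun t => hFun m t (X j ω) (a j)) θ
        else gaussExp (a j) (Complex.I * X j ω) (n j) (t j) with hF
    have hFm : ∀ j, HasMoments P (F n t j) := by
      intro j
      by_cases hj : j ∈ S
      · simpa only [hF, hj, if_true] using hasMoments_iteratedDeriv_hFun (hX j) (ha j) m r θ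
      · simpa only [hF, hj, if_false] using hasMoments_gaussExp (hX j) (a j) (n j) (t j)
    have hnn : 0 ≤ W ^ S.card * M := (norm_nonneg _).trans (ih n t hn ht)
    have key := norm_integral_mul_iteratedDeriv_hFun_le (hX i) (ha i) (m := m) (r := r) (θ := θ)
      (M := W ^ S.card * M) (HasMoments.prod (Finset.univ.erase i) fun j _ => hFm j) ?_
    · refine le_trans (le_of_eq ?_) (key.trans ((mul_le_mul_of_nonneg_right (hW i) hnn).trans
        (le_of_eq ?_)))
      · congr 2
        funext ω
        rw [← Finset.prod_erase_mul _ _ (Finset.mem_univ i),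
          if_pos (Finset.mem_insert_self i S)]
        congr 1
        refine Finset.prod_congr rfl fun j hj => ?_
        simp only [hF, Finset.mem_insert, Finset.ne_of_mem_erase hj, false_or]
      · rw [Finset.card_insert_of_notMem hi]
        ring
    · intro k hk hk' τ hτ
      refine le_trans (le_of_eq ?_) (ih (Function.update n i k) (Function.update t i τ)
        (fun j => ?_) (fun j => ?_))
      · congr 2
        funext ω
        rw [← Finset.prod_erase_mul _ _ (Finset.mem_univ i), if_neg hi, Function.update_self,
          Function.update_self]
        congr 1
        refine Finset.prod_congr rfl fun j hj => ?_
        simp only [hF, Function.update_of_ne (Finset.ne_of_mem_erase hj)]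
      · by_cases hj : j = i
        · subst hj
          simpa using ⟨hk, hk'⟩
        · simpa [hj] using hn j
      · by_cases hj : j = i
        · subst hj
          simpa using hτ
        · simpa [hj] using ht j

end GaussianVector

/-- The quantitative properties of the covariance matrix of the points, relative to the set `Sing`
of singletons and to the choice `u` of representatives, which bound graph values by `Ω*`. -/
structure IsClusterCov {K : ℕ} (C : ℝ) (R : Fin K → Fin K → ℝ) (Sing : Fin K → Prop)
    (u : Fin K → Fin K) : Prop where
  symm : ∀ i j, R i j = R j i
  nonneg : ∀ i j, 0 ≤ R i j
  le : ∀ i j, R i j ≤ C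
  tri : ∀ i j k, R i j * R i k ≤ C * R j k
  idem : ∀ i, u (u i) = u i
  sing : ∀ i, Sing (u i) → Sing i
  rep : ∀ i j, R j i ≤ C * R j (u i)

/-- The maximum of the graph values over `Ω*`. -/
def maxGraphValue {K : ℕ} (R : Fin K → Fin K → ℝ) (Sing : Fin K → Prop) (u : Fin K → Fin K)
    (m : ℕ) : ℝ :=
  sSup {v : ℝ | ∃ G : Fin K → Fin K → ℕ, (∀ i j, G i j = G j i) ∧ (∀ i, G i i = 0) ∧
    InOmegaStar Sing u m G ∧ v = gval R G}

section GraphBounds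

variable {K : ℕ} {C : ℝ} {R : Fin K → Fin K → ℝ} {Sing : Fin K → Prop} {u : Fin K → Fin K} {m : ℕ}

lemma weightedDeg_le (u : Fin K → Fin K) (G : Fin K → Fin K → ℕ) :
    weightedDeg u G ≤ 2 * ∑ i, gdeg G i := by
  rw [weightedDeg, Finset.mul_sum]
  refine Finset.sum_le_sum fun i _ => Nat.mul_le_mul_right _ ?_
  split_ifs <;> omega

lemma maxGraphValue_nonneg (hR : ∀ i j, 0 ≤ R i j) : 0 ≤ maxGraphValue R Sing u m := by
  refine Real.sSup_nonneg ?_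
  rintro v ⟨G, -, -, -, rfl⟩
  exact gval_nonneg hR G

lemma IsClusterCov.gval_le (h : IsClusterCov C R Sing u) (hC : 1 ≤ C) {G : Fin K → Fin K → ℕ}
    (hG : IsMultigraph G) (hdeg : ∀ i, m ≤ gdeg G i) :
    gval R G ≤ C ^ (2 * ∑ i, gdeg G i) * maxGraphValue R Sing u m := by
  obtain ⟨G', hG', hG'Ω, hle⟩ := exists_inOmegaStar hC h.symm h.nonneg h.le h.tri h.idem h.sing
    h.rep G hG fun i _ => hdeg i
  have hsup : gval R G' ≤ maxGraphValue R Sing u m :=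
    le_csSup (bddAbove_gval hC h.nonneg h.le Sing u m) ⟨G', hG'.1, hG'.2, hG'Ω, rfl⟩
  have h0 := gval_nonneg h.nonneg G'
  calc gval R G ≤ C ^ weightedDeg u G * gval R G' := hle
    _ ≤ C ^ (2 * ∑ i, gdeg G i) * maxGraphValue R Sing u m := by
      gcongr
      exact weightedDeg_le u G

lemma abs_le_of_mem_uIcc_zero {θ τ : ℝ} (h : τ ∈ Set.uIcc 0 θ) : |τ| ≤ |θ| := by
  simpa using Set.abs_sub_left_of_mem_uIcc h

lemma exists_abs_le_of_mem_span_graphTerms (hC : 1 ≤ C) {n : Fin K → ℕ} (hn : ∀ j, m ≤ n j)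
    {p : (Fin K → Fin K → ℝ) → (Fin K → ℝ) → ℝ} (hp : p ∈ Submodule.span ℝ (graphTerms n)) :
    ∃ B ≥ 0, ∃ N : ℕ, ∀ (R : Fin K → Fin K → ℝ) (Sing : Fin K → Prop) (u : Fin K → Fin K),
      IsClusterCov C R Sing u → ∀ (θ : ℝ) (t : Fin K → ℝ), (∀ j, t j ∈ Set.uIcc 0 θ) →
      |p R t| ≤ B * (1 + |θ|) ^ N * maxGraphValue R Sing u m := by
  induction hp using Submodule.span_induction with
  | mem p hp =>
    obtain ⟨a, E, hE, hdeg, rfl⟩ := hp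
    refine ⟨C ^ (2 * ∑ i, gdeg E i), by positivity, ∑ j, a j, fun R Sing u h θ t ht => ?_⟩
    have h1 := h.gval_le hC hE (m := m) fun i => by rw [hdeg i]; exact (hn i).trans (by omega)
    have h2 : ∏ j, |t j| ^ a j ≤ (1 + |θ|) ^ ∑ j, a j := by
      rw [← Finset.prod_pow_eq_pow_sum]
      refine Finset.prod_le_prod (fun j _ => by positivity) fun j _ => ?_
      gcongr
      linarith [abs_le_of_mem_uIcc_zero (ht j)]
    have h0 := gval_nonneg h.nonneg E
    rw [graphTerm, abs_mul, Finset.abs_prod, abs_of_nonneg h0]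
    simp only [abs_pow]
    calc _ ≤ (1 + |θ|) ^ (∑ j, a j) *
          (C ^ (2 * ∑ i, gdeg E i) * maxGraphValue R Sing u m) := by gcongr
      _ = _ := by ring
  | zero =>
    refine ⟨0, le_rfl, 0, fun R Sing u h θ t ht => ?_⟩
    simp
  | add p q _ _ ihp ihq =>
    obtain ⟨B, hB, N, hp⟩ := ihp
    obtain ⟨B', hB', N', hq⟩ := ihq
    refine ⟨B + B', by positivity, N + N', fun R Sing u h θ t ht => ?_⟩
    have h0 := maxGraphValue_nonneg (Sing := Sing) (u := u) (m := m) h.nonneg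
    have h1 : 1 ≤ 1 + |θ| := by linarith [abs_nonneg θ]
    calc |(p + q) R t| ≤ |p R t| + |q R t| := abs_add_le _ _
      _ ≤ B * (1 + |θ|) ^ N * maxGraphValue R Sing u m +
          B' * (1 + |θ|) ^ N' * maxGraphValue R Sing u m :=
        add_le_add (hp R Sing u h θ t ht) (hq R Sing u h θ t ht)
      _ ≤ B * (1 + |θ|) ^ (N + N') * maxGraphValue R Sing u m +
          B' * (1 + |θ|) ^ (N + N') * maxGraphValue R Sing u m := by
        gcongr <;> first | exact h1 | omega
      _ = _ := by ring
  | smul c p _ ihp =>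
    obtain ⟨B, hB, N, hp⟩ := ihp
    refine ⟨|c| * B, by positivity, N, fun R Sing u h θ t ht => ?_⟩
    have h1 := hp R Sing u h θ t ht
    calc |(c • p) R t| = |c| * |p R t| := abs_mul _ _
      _ ≤ |c| * (B * (1 + |θ|) ^ N * maxGraphValue R Sing u m) := by gcongr
      _ = _ := by ring

lemma pairExp_le_one (hR : ∀ i j, 0 ≤ R i j) {θ : ℝ} {t : Fin K → ℝ}
    (ht : ∀ j, t j ∈ Set.uIcc 0 θ) : pairExp R t ≤ 1 := by
  rw [pairExp, Real.exp_le_one_iff]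
  have h1 : ∀ i j, 0 ≤ t i * t j := by
    intro i j
    rcases le_total 0 θ with hθ | hθ
    · simp only [Set.uIcc_of_le hθ, Set.mem_Icc] at ht
      exact mul_nonneg (ht i).1 (ht j).1
    · simp only [Set.uIcc_of_ge hθ, Set.mem_Icc] at ht
      exact mul_nonneg_of_nonpos_of_nonpos (ht i).2 (ht j).2
  have h2 : 0 ≤ ∑ i, ∑ j, (if i = j then 0 else R i j) * (t i * t j) :=
    Finset.sum_nonneg fun i _ => Finset.sum_nonneg fun j _ => mul_nonneg
      (by split_ifs; exacts [le_rfl, hR i j]) (h1 i j)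
  linarith

lemma exists_norm_le_maxGraphValue (K m r : ℕ) (hC : 1 ≤ C) :
    ∃ B ≥ 0, ∃ N : ℕ, ∀ (R : Fin K → Fin K → ℝ) (Sing : Fin K → Prop) (u : Fin K → Fin K),
      IsClusterCov C R Sing u →
      ∀ H : (Fin K → ℕ) → (Fin K → ℝ) → ℂ, (∀ t, H 0 t = pairExp R t) →
      (∀ n t i, HasDerivAt (fun τ => H n (Function.update t i τ))
        (H (Function.update n i (n i + 1)) t) (t i)) →
      ∀ n : Fin K → ℕ, (∀ j, m ≤ n j ∧ n j ≤ m + r) →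
      ∀ (θ : ℝ) (t : Fin K → ℝ), (∀ j, t j ∈ Set.uIcc 0 θ) →
      ‖H n t‖ ≤ B * (1 + |θ|) ^ N * maxGraphValue R Sing u m := by
  have key : ∀ n : Fin K → ℕ, ∃ B ≥ 0, ∃ N : ℕ, (∀ j, m ≤ n j) →
      ∀ (R : Fin K → Fin K → ℝ) (Sing : Fin K → Prop) (u : Fin K → Fin K),
      IsClusterCov C R Sing u →
      ∀ H : (Fin K → ℕ) → (Fin K → ℝ) → ℂ, (∀ t, H 0 t = pairExp R t) →
      (∀ n t i, HasDerivAt (fun τ => H n (Function.update t i τ))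
        (H (Function.update n i (n i + 1)) t) (t i)) →
      ∀ (θ : ℝ) (t : Fin K → ℝ), (∀ j, t j ∈ Set.uIcc 0 θ) →
      ‖H n t‖ ≤ B * (1 + |θ|) ^ N * maxGraphValue R Sing u m := by
    intro n
    by_cases hn : ∀ j, m ≤ n j
    · obtain ⟨p, hp, hpH⟩ := exists_mem_span_graphTerms n
      obtain ⟨B, hB, N, hbd⟩ := exists_abs_le_of_mem_span_graphTerms hC hn hp
      refine ⟨B, hB, N, fun _ R Sing u h H h0 hd θ t ht => ?_⟩
      rw [hpH R h.symm H h0 hd t, Complex.norm_real, norm_mul, Real.norm_eq_abs, Real.norm_eq_abs,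
        pairExp, Real.abs_exp, ← pairExp]
      exact (mul_le_of_le_one_right (abs_nonneg _) (pairExp_le_one h.nonneg ht)).trans
        (hbd R Sing u h θ t ht)
    · exact ⟨0, le_rfl, 0, fun h => absurd h hn⟩
  choose B hB N hbd using key
  let A : Finset (Fin K → ℕ) := Fintype.piFinset fun _ => Finset.range (m + r + 1)
  refine ⟨∑ n ∈ A, B n, Finset.sum_nonneg fun n _ => hB n, ∑ n ∈ A, N n,
    fun R Sing u h H h0 hd n hn θ t ht => ?_⟩
  have hnA : n ∈ A := Fintype.mem_piFinset.2 fun j => Finset.mem_range.2 (by have := hn j; omega)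
  have hnn := maxGraphValue_nonneg (Sing := Sing) (u := u) (m := m) h.nonneg
  refine (hbd n (fun j => (hn j).1) R Sing u h H h0 hd θ t ht).trans ?_
  have h1 : B n ≤ ∑ n ∈ A, B n := Finset.single_le_sum (fun n _ => hB n) hnA
  have h2 : (1 + |θ|) ^ N n ≤ (1 + |θ|) ^ ∑ n ∈ A, N n :=
    pow_le_pow_right₀ (by linarith [abs_nonneg θ])
      (Finset.single_le_sum (fun n _ => Nat.zero_le _) hnA)
  have h3 := (hB n).trans h1
  gcongr

end GraphBounds

lemma exists_pow_mul_exp_neg_le {c : ℝ} (hc : 0 < c) (N : ℕ) :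
    ∃ B ≥ 0, ∀ θ : ℝ, (1 + |θ|) ^ N * Real.exp (-(c * θ ^ 2)) ≤ B := by
  refine ⟨N.factorial * Real.exp (1 + 1 / (4 * c)), by positivity, fun θ => ?_⟩
  have h1 := Real.pow_div_factorial_le_exp (1 + |θ|) (by positivity) N
  rw [div_le_iff₀' (by positivity)] at h1
  have h2 : 1 + |θ| + -(c * θ ^ 2) ≤ 1 + 1 / (4 * c) := by
    have e : 1 + 1 / (4 * c) - (1 + |θ| + -(c * θ ^ 2)) = c * (|θ| - 1 / (2 * c)) ^ 2 := by
      rw [← sq_abs θ]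
      field_simp
      ring
    have : 0 ≤ c * (|θ| - 1 / (2 * c)) ^ 2 := by positivity
    linarith
  calc (1 + |θ|) ^ N * Real.exp (-(c * θ ^ 2))
      ≤ N.factorial * Real.exp (1 + |θ|) * Real.exp (-(c * θ ^ 2)) := by gcongr
    _ = N.factorial * Real.exp (1 + |θ| + -(c * θ ^ 2)) := by rw [Real.exp_add _ (-_), mul_assoc]
    _ ≤ _ := by gcongr

lemma CovBound.isClusterCov {d K : ℕ} {s : Fin d → ℝ} {α Λ ε : ℝ}
    {R : (Fin d → ℝ) → (Fin d → ℝ) → ℝ} (h : CovBound s α Λ ε R) (hR : ∀ x y, R x y = R y x)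
    (hs : ∀ j, 1 ≤ s j) (hα : 0 < α) (hΛ : 1 < Λ) (hε : 0 < ε) {x : Fin K → Fin d → ℝ}
    {u : Fin K → Fin K} (hu : ∀ i, SameCluster s ε x i (u i))
    (hu' : ∀ i j, SameCluster s ε x i j → u i = u j) :
    IsClusterCov (Λ * (K + 1) ^ α * (Λ ^ 3 * 2 ^ α)) (fun i j => R (x i) (x j))
      (IsSingletonIdx s ε x) u := by
  have hK : 1 ≤ (K + 1 : ℝ) ^ α := Real.one_le_rpow (by simp) hα.le
  have h2 : 1 ≤ (2 : ℝ) ^ α := Real.one_le_rpow (by norm_num) hα.le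
  have hA : Λ ≤ Λ * (K + 1) ^ α := le_mul_of_one_le_right (by linarith) hK
  have hB : 1 ≤ Λ ^ 3 * 2 ^ α := one_le_mul_of_one_le_of_one_le (one_le_pow₀ hΛ.le) h2
  have hpos := h.pos hΛ hε
  refine ⟨fun i j => hR _ _, fun i j => (hpos _ _).le, fun i j => ?_, fun i j k => ?_,
    fun i => (hu' _ _ (hu i)).symm, fun i hi => ?_, fun i j => ?_⟩
  · exact (h.le_const hα hΛ hε _ _).trans
      (hA.trans (le_mul_of_one_le_right (by linarith) hB))
  · refine (h.mul_le hs hα hΛ hε (x i) (x j) (x k)).trans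
      (mul_le_mul_of_nonneg_right ?_ (hpos _ _).le)
    exact le_mul_of_one_le_left (by linarith) (by linarith)
  · have e := hi i (hu i).symm
    rwa [← e] at hi
  · have h3 := h.sameCluster_ge hs hα hΛ hε (hu i)
    have h4 := h.mul_le hs hα hΛ hε (x i) (x j) (x (u i))
    calc R (x j) (x i) ≤ (Λ * (K + 1) ^ α * R (x i) (x (u i))) * R (x j) (x i) :=
          le_mul_of_one_le_left (hpos _ _).le h3
      _ = Λ * (K + 1) ^ α * (R (x i) (x j) * R (x i) (x (u i))) := by
          rw [hR (x j) (x i)]; ring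
      _ ≤ Λ * (K + 1) ^ α * (Λ ^ 3 * 2 ^ α * R (x j) (x (u i))) := by gcongr
      _ = _ := by ring

/-- Proposition 2.7: there are `C, L > 0` depending only on
`d, s, α, Λ, K, m, r` such that
`|E ∏_j ∂_θ^r 𝓗_m(e^{iθΦ_ε(x_j)})| ≤ C · max_{Γ ∈ Ω*} |Γ|`, where `Ω*` is taken with respect
to the clusters of `x₁,…,x_K` at scale `Lε` for any fixed choice of representatives. -/
theorem stmt9 (d : ℕ) (hd : 1 ≤ d) (s : Fin d → ℝ) (hs : ∀ j, 1 ≤ s j)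
    (α Λ : ℝ) (hα : 0 < α) (hα' : α < ∑ j, s j) (hΛ : 1 < Λ)
    (K : ℕ) (hK : 1 ≤ K) (m r : ℕ) :
    ∃ C > 0, ∃ L > 0, ∀ ε ∈ Set.Ioo (0:ℝ) 1,
      ∀ (Ω : Type) (_ : MeasurableSpace Ω) (P : Measure Ω), IsProbabilityMeasure P →
      ∀ Φ : (Fin d → ℝ) → Ω → ℝ,
        IsCenteredGaussianFamily P Φ →
        CovBound s α Λ ε (fun x y => ∫ ω, Φ x ω * Φ y ω ∂P) →
        ∀ (θ : ℝ) (x : Fin K → Fin d → ℝ) (u : Fin K → Fin K),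
          (∀ i, SameCluster s (L * ε) x i (u i)) →
          (∀ i j, SameCluster s (L * ε) x i j → u i = u j) →
          ‖∫ ω, ∏ j, iteratedDeriv r
              (fun t => hFun m t (Φ (x j) ω) (∫ ω', Φ (x j) ω' ^ 2 ∂P)) θ ∂P‖ ≤
            C * sSup {v : ℝ | ∃ G : Fin K → Fin K → ℕ,
              (∀ i j, G i j = G j i) ∧ (∀ i, G i i = 0) ∧
              InOmegaStar (IsSingletonIdx s (L * ε) x) u m G ∧
              v = gval (fun i j => ∫ ω, Φ (x i) ω * Φ (x j) ω ∂P) G} := by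
  have hΛ0 : 0 < Λ := by linarith
  obtain ⟨A, hA, hW⟩ := exists_sum_norm_gaussExp_le hΛ m r
  have hC₀ : 1 ≤ Λ * (K + 1 : ℝ) ^ α * (Λ ^ 3 * 2 ^ α) :=
    one_le_mul_of_one_le_of_one_le
      (one_le_mul_of_one_le_of_one_le hΛ.le (Real.one_le_rpow (by simp) hα.le))
      (one_le_mul_of_one_le_of_one_le (one_le_pow₀ hΛ.le)
        (Real.one_le_rpow (by norm_num) hα.le))
  obtain ⟨B, hB, N, hM⟩ := exists_norm_le_maxGraphValue K m r hC₀
  obtain ⟨D, hD, hexp⟩ := exists_pow_mul_exp_neg_le (c := 1 / (2 * Λ)) (by positivity)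
    ((r + m) * K + N)
  refine ⟨A ^ K * B * D + 1, by positivity, 1, one_pos, ?_⟩
  intro ε hε Ω _ P _ Φ hΦ hcov θ x u hu hu'
  rw [one_mul] at hu hu' ⊢
  have hsq : ∀ y, ∫ ω, Φ y ω ^ 2 ∂P = ∫ ω, Φ y ω * Φ y ω ∂P := fun y => by simp only [sq]
  have hX := hΦ.map_sum_eq x
  have hmom : ∀ j, HasMoments P fun ω => (Φ (x j) ω : ℂ) := fun j p =>
    (memLp_of_forall_map_sum (X := fun j => Φ (x j)) hX j p).ofReal
  have ha : ∀ j, Λ⁻¹ ≤ ∫ ω, Φ (x j) ω ^ 2 ∂P := fun j => by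
    rw [hsq]
    exact hcov.inv_le_diag hs hΛ hε.1 (x j)
  have ha' : ∀ j, ∫ ω, Φ (x j) ω ^ 2 ∂P ≤ Λ := fun j => by
    rw [hsq]
    exact hcov.le_const hα hΛ hε.1 (x j) (x j)
  have hapos : ∀ j, 0 < ∫ ω, Φ (x j) ω ^ 2 ∂P := fun j => (inv_pos.2 hΛ0).trans_le (ha j)
  have hclu := hcov.isClusterCov (fun y z => by simp only [mul_comm]) hs hα hΛ hε.1 hu hu'
  have hbound := norm_integral_prod_ite_le hmom hapos (m := m) (r := r) (θ := θ)
    (fun j => hW _ θ (ha j) (ha' j))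
    (fun n t hn ht => hM _ _ u hclu
      (fun n t => ∫ ω, ∏ j, gaussExp (∫ ω', Φ (x j) ω' ^ 2 ∂P : ℝ)
        (Complex.I * Φ (x j) ω) (n j) (t j) ∂P)
      (integral_prod_gaussExp_zero hX)
      (hasDerivAt_integral_prod_gaussExp hmom fun j => (hapos j).le) n hn θ t ht)
    Finset.univ (fun _ => m) 0 (fun _ => by omega) (fun _ => Set.left_mem_uIcc)
  simp only [Finset.mem_univ, if_true, Finset.card_univ, Fintype.card_fin] at hbound
  refine hbound.trans ?_
  have hnn := maxGraphValue_nonneg (Sing := IsSingletonIdx s ε x) (u := u) (m := m) hclu.nonneg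
  change _ ≤ _ * maxGraphValue _ (IsSingletonIdx s ε x) u m
  rw [← mul_assoc]
  refine mul_le_mul_of_nonneg_right ?_ hnn
  have hE : Real.exp (-(θ ^ 2) / (2 * Λ)) ^ K ≤ Real.exp (-(1 / (2 * Λ) * θ ^ 2)) := by
    have e : -(θ ^ 2) / (2 * Λ) = -(1 / (2 * Λ) * θ ^ 2) := by ring
    rw [e]
    refine pow_le_of_le_one (Real.exp_nonneg _) ?_ (by omega)
    rw [Real.exp_le_one_iff, neg_nonpos]
    positivity
  calc (A * (1 + |θ|) ^ (r + m) * Real.exp (-(θ ^ 2) / (2 * Λ))) ^ K * (B * (1 + |θ|) ^ N)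
      = A ^ K * B * ((1 + |θ|) ^ ((r + m) * K + N) * Real.exp (-(θ ^ 2) / (2 * Λ)) ^ K) := by
        rw [mul_pow, mul_pow, pow_add _ (_ * _), pow_mul]; ring
    _ ≤ A ^ K * B * ((1 + |θ|) ^ ((r + m) * K + N) *
        Real.exp (-(1 / (2 * Λ) * θ ^ 2))) := by gcongr
    _ ≤ A ^ K * B * D := by gcongr; exact hexp θ
    _ ≤ A ^ K * B * D + 1 := by linarith
end
end

section
/- Let α ∈ (0,|s|) and Λ > 0. Let G : ℝ^d ∖ {0} → ℝ be measurable with 0 ≤ G(x) ≤ Λ |x|_s^{−α} for all x ≠ 0, and suppose there exists a locally integrable g : ℝ^d → ℝ such that ∫_Ω |ε^α G(ε^{s₁}x₁, …, ε^{s_d}x_d) − g(x)| dx → 0 as ε → 0 for every bounded measurable set Ω ⊂ ℝ^d. Then for every continuous compactly supported ρ : ℝ^d → ℝ, one has ε^α ∫∫_{ℝ^d×ℝ^d} G(x−y) ρ_ε(x) ρ_ε(y) dx dy → ∫∫_{ℝ^d×ℝ^d} g(x−y) ρ(x) ρ(y) dx dy as ε → 0, where ρ_ε(x) := ε^{−|s|}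 ρ(x₁/ε^{s₁}, …, x_d/ε^{s_d}). -/
open MeasureTheory Filter

noncomputable section

def scaled {d : ℕ} (s : Fin d → ℝ) (lam : ℝ) (φ : (Fin d → ℝ) → ℝ) (x : Fin d → ℝ) : ℝ :=
  lam ^ (-(∑ j, s j)) * φ (fun j => x j / lam ^ (s j))

/-- Weighted AM-GM: the anisotropic norm dominates a geometric mean of the coordinates. -/
theorem prod_rpow_le_anorm {d : ℕ} {s : Fin d → ℝ} (hs : ∀ j, 0 < s j) (hS : 0 < ∑ j, s j)
    (x : Fin d → ℝ) : ∏ j, |x j| ^ (1 / ∑ i, s i) ≤ anorm s x := by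
  have hw : ∀ j, s j / ∑ i, s i ≤ 1 := fun j =>
    (div_le_one hS).2 (Finset.single_le_sum (fun i _ => (hs i).le) (Finset.mem_univ j))
  have hz : ∀ j, 0 ≤ |x j| ^ (1 / s j) := fun j => by positivity
  calc ∏ j, |x j| ^ (1 / ∑ i, s i)
      = ∏ j, (|x j| ^ (1 / s j)) ^ (s j / ∑ i, s i) := by
        refine Finset.prod_congr rfl fun j _ => ?_
        rw [← Real.rpow_mul (abs_nonneg _)]
        have := (hs j).ne'
        congr 1
        field_simp
    _ ≤ ∑ j, s j / (∑ i, s i) * |x j| ^ (1 / s j) :=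
        Real.geom_mean_le_arith_mean_weighted _ _ _ (fun j _ => div_nonneg (hs j).le hS.le)
          (by rw [← Finset.sum_div, div_self hS.ne']) fun j _ => hz j
    _ ≤ anorm s x :=
        Finset.sum_le_sum fun j _ => mul_le_of_le_one_left (hz j) (hw j)

theorem anorm_rpow_neg_le {d : ℕ} {s : Fin d → ℝ} (hs : ∀ j, 0 < s j) (hS : 0 < ∑ j, s j)
    {α : ℝ} (hα : 0 ≤ α) {x : Fin d → ℝ} (hx : ∀ j, x j ≠ 0) :
    anorm s x ^ (-α) ≤ ∏ j, |x j| ^ (-(α / ∑ i, s i)) := by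
  have hpos : ∀ j, 0 < |x j| := fun j => abs_pos.2 (hx j)
  calc anorm s x ^ (-α) ≤ (∏ j, |x j| ^ (1 / ∑ i, s i)) ^ (-α) :=
        Real.rpow_le_rpow_of_nonpos
          (Finset.prod_pos fun j _ => Real.rpow_pos_of_pos (hpos j) _)
          (prod_rpow_le_anorm hs hS x) (neg_nonpos.2 hα)
    _ = ∏ j, |x j| ^ (-(α / ∑ i, s i)) := by
        rw [← Real.finsetProd_rpow _ _ fun j _ => by positivity]
        refine Finset.prod_congr rfl fun j _ => ?_
        rw [← Real.rpow_mul (abs_nonneg _)]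
        congr 1
        ring

theorem integrableOn_Icc_abs_rpow {r : ℝ} (hr : -1 < r) (R : ℝ) :
    IntegrableOn (fun t : ℝ => |t| ^ r) (Set.Icc (-R) R) := by
  rcases lt_or_ge R 0 with hR | hR
  · rw [Set.Icc_eq_empty (by linarith)]
    exact integrableOn_empty
  have h1 : IntervalIntegrable (fun t : ℝ => |t| ^ r) volume 0 R := by
    refine (intervalIntegral.intervalIntegrable_rpow' hr).congr ?_
    intro t ht
    rw [Set.uIoc_of_le hR] at ht
    simp only [abs_of_pos ht.1]
  have h2 : IntervalIntegrable (fun t : ℝ => |t| ^ r) volume (-R) 0 := by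
    simpa [div_neg] using (h1.comp_mul_left (c := -1)).symm
  rw [← intervalIntegrable_iff_integrableOn_Icc_of_le (by linarith)]
  exact h2.trans h1

theorem locallyIntegrable_prod_abs_rpow {ι : Type*} [Fintype ι] {r : ℝ} (hr : -1 < r) :
    LocallyIntegrable fun x : ι → ℝ => ∏ j, |x j| ^ r := by
  refine locallyIntegrable_iff.2 fun K hK => ?_
  obtain ⟨R, hR⟩ := hK.isBounded.subset_closedBall 0
  refine IntegrableOn.mono_set (t := Set.univ.pi fun _ : ι => Set.Icc (-R) R) ?_ ?_
  · rw [IntegrableOn, volume_pi, Measure.restrict_pi_pi]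
    exact Integrable.fintype_prod (f := fun _ : ι => fun t : ℝ => |t| ^ r)
      fun _ => integrableOn_Icc_abs_rpow hr R
  · intro x hx j _
    have h := (norm_le_pi_norm x j).trans (mem_closedBall_zero_iff.1 (hR hx))
    exact abs_le.1 h

theorem ae_forall_apply_ne_zero {ι : Type*} [Fintype ι] : ∀ᵐ x : ι → ℝ, ∀ j, x j ≠ 0 := by
  refine ae_all_iff.2 fun j => ?_
  have h := Measure.ae_eval_ne (μ := fun _ : ι => (volume : Measure ℝ)) j 0
  simpa [volume_pi] using h

/-- A kernel with a singularity of order less than the homogeneous dimension is locally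
integrable after any diagonal rescaling. -/
theorem locallyIntegrable_comp_diagonal {d : ℕ} (hd : 1 ≤ d) {s : Fin d → ℝ} (hs : ∀ j, 0 < s j)
    {α Λ : ℝ} (hα0 : 0 ≤ α) (hα : α < ∑ j, s j) (hΛ : 0 ≤ Λ)
    {G : (Fin d → ℝ) → ℝ} (hGmeas : Measurable G)
    (hG0 : ∀ x, x ≠ 0 → 0 ≤ G x) (hGbd : ∀ x, x ≠ 0 → G x ≤ Λ * anorm s x ^ (-α))
    {c : Fin d → ℝ} (hc : ∀ j, 0 < c j) :
    LocallyIntegrable fun x : Fin d → ℝ => G fun j => c j * x j := by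
  have hS : 0 < ∑ j, s j := hα0.trans_lt hα
  have hr : -1 < -(α / ∑ i, s i) := neg_lt_neg ((div_lt_one hS).2 hα)
  have hmeas : Measurable fun x : Fin d → ℝ => G fun j => c j * x j :=
    hGmeas.comp (measurable_pi_lambda _ fun j => (measurable_pi_apply j).const_mul _)
  refine ((locallyIntegrable_prod_abs_rpow (ι := Fin d) hr).smul
    (Λ * ∏ j, c j ^ (-(α / ∑ i, s i)))).mono hmeas.aestronglyMeasurable ?_
  filter_upwards [ae_forall_apply_ne_zero (ι := Fin d)] with x hx
  have hcx : ∀ j, c j * x j ≠ 0 := fun j => mul_ne_zero (hc j).ne' (hx j)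
  have hne : (fun j => c j * x j) ≠ 0 := fun h => hcx ⟨0, hd⟩ (congrFun h _)
  rw [Real.norm_of_nonneg (hG0 _ hne)]
  refine le_trans ?_ (Real.le_norm_self _)
  refine (hGbd _ hne).trans ((mul_le_mul_of_nonneg_left
    (anorm_rpow_neg_le hs hS hα0 hcx) hΛ).trans_eq ?_)
  simp only [Pi.smul_apply, smul_eq_mul, mul_assoc, ← Finset.prod_mul_distrib]
  congr 1
  refine Finset.prod_congr rfl fun j _ => ?_
  rw [abs_mul, abs_of_pos (hc j), Real.mul_rpow (hc j).le (abs_nonneg _)]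

theorem integral_eq_prod_mul_integral_comp_diagonal {ι : Type*} [Fintype ι] {c : ι → ℝ}
    (hc : ∀ j, 0 < c j) (f : (ι → ℝ) → ℝ) :
    ∫ x, f x = (∏ j, c j) * ∫ x : ι → ℝ, f fun j => c j * x j := by
  classical
  have hpos : 0 < ∏ j, c j := Finset.prod_pos fun j _ => hc j
  let e : (ι → ℝ) ≃ᵐ (ι → ℝ) :=
    MeasurableEquiv.piCongrRight fun j => (MeasurableEquiv.mulLeft₀ (c j) (hc j).ne')
  have he : ∀ x, e x = fun j => c j * x j := fun _ => rfl
  have hD : (Matrix.diagonal c).det ≠ 0 := by rw [Matrix.det_diagonal]; exact hpos.ne'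
  have hvol := Real.smul_map_diagonal_volume_pi hD
  have hfun : (⇑(Matrix.toLin' (Matrix.diagonal c)) : (ι → ℝ) → ι → ℝ) = e := by
    ext x j
    simp [he, Matrix.mulVec_diagonal]
  rw [Matrix.det_diagonal, abs_of_pos hpos, hfun] at hvol
  conv_lhs => rw [← hvol]
  rw [integral_smul_measure, integral_map_equiv, ENNReal.toReal_ofReal hpos.le, smul_eq_mul]
  rfl

theorem integral_scaled {d : ℕ} (s : Fin d → ℝ) (G ρ : (Fin d → ℝ) → ℝ) {ε : ℝ} (hε : 0 < ε) :
    ∫ x : Fin d → ℝ, ∫ y : Fin d → ℝ, G (x - y) * scaled s ε ρ x * scaled s ε ρ y =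
      ∫ x : Fin d → ℝ, ∫ y : Fin d → ℝ, G (fun j => ε ^ s j * (x - y) j) * ρ x * ρ y := by
  have hc : ∀ j, 0 < ε ^ s j := fun j => Real.rpow_pos_of_pos hε _
  have hprod : ∏ j, ε ^ s j = ε ^ ∑ j, s j := (Real.rpow_sum_of_pos hε _ _).symm
  have hρ : ∀ x : Fin d → ℝ,
      scaled s ε ρ (fun j => ε ^ s j * x j) = ε ^ (-∑ j, s j) * ρ x := fun x => by
    simp only [scaled, mul_div_cancel_left₀ _ (hc _).ne']
  have hinv : ε ^ (∑ j, s j) * ε ^ (-∑ j, s j) = 1 := by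
    rw [← Real.rpow_add hε, add_neg_cancel, Real.rpow_zero]
  rw [integral_eq_prod_mul_integral_comp_diagonal hc, ← integral_const_mul]
  refine integral_congr_ae (.of_forall fun x => ?_)
  dsimp only
  rw [integral_eq_prod_mul_integral_comp_diagonal hc, ← integral_const_mul,
    ← integral_const_mul]
  refine integral_congr_ae (.of_forall fun y => ?_)
  have hsub : ((fun j => ε ^ s j * x j) - fun j => ε ^ s j * y j) =
      fun j => ε ^ s j * (x - y) j := by
    ext j
    simp [mul_sub]
  dsimp only
  rw [hρ, hρ, hsub, hprod]
  linear_combination (G (fun j => ε ^ s j * (x - y) j) * ρ x * ρ y *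
    (ε ^ (∑ j, s j) * ε ^ (-∑ j, s j) + 1)) * hinv

section BilinearForm

variable {d : ℕ} {ρ h : (Fin d → ℝ) → ℝ}

theorem integrable_kernel_mul (hρc : Continuous ρ) (hρs : HasCompactSupport ρ)
    (hh : LocallyIntegrable h) (x : Fin d → ℝ) :
    Integrable fun y : Fin d → ℝ => h (x - y) * ρ x * ρ y := by
  have := (hρs.convolutionExists_left (ContinuousLinearMap.mul ℝ ℝ) hρc hh x).integrable
  refine (this.const_mul (ρ x)).congr (.of_forall fun y => ?_)
  simp only [ContinuousLinearMap.mul_apply']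
  ring

theorem integrable_integral_kernel_mul (hρc : Continuous ρ) (hρs : HasCompactSupport ρ)
    (hh : LocallyIntegrable h) :
    Integrable fun x : Fin d → ℝ => ∫ y : Fin d → ℝ, h (x - y) * ρ x * ρ y := by
  have hcont := hρs.continuous_convolution_left (ContinuousLinearMap.mul ℝ ℝ) hρc hh
  refine ((hρc.mul hcont).integrable_of_hasCompactSupport hρs.mul_right).congr
    (.of_forall fun x => ?_)
  simp only [Pi.mul_apply, convolution, ContinuousLinearMap.mul_apply']
  rw [← integral_const_mul]
  refine integral_congr_ae (.of_forall fun y => ?_)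
  dsimp only
  ring

theorem abs_integral_kernel_mul_le {M : ℝ} (hρs : HasCompactSupport ρ)
    (hM : ∀ x, |ρ x| ≤ M) (hh : LocallyIntegrable h) {B : Set (Fin d → ℝ)} (hB : IsCompact B)
    (hsub : ∀ x ∈ tsupport ρ, ∀ y ∈ tsupport ρ, x - y ∈ B) :
    |∫ x : Fin d → ℝ, ∫ y : Fin d → ℝ, h (x - y) * ρ x * ρ y| ≤
      (M * M * volume.real (tsupport ρ)) * ∫ z in B, |h z| := by
  have hM0 : 0 ≤ M := (abs_nonneg _).trans (hM 0)
  have hI : IntegrableOn (fun z => |h z|) B := (hh.integrableOn_isCompact hB).abs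
  have hInd : Integrable (B.indicator fun z => |h z|) := hI.integrable_indicator hB.measurableSet
  have hzero : ∀ x ∉ tsupport ρ, ρ x = 0 := fun x hx => image_eq_zero_of_notMem_tsupport hx
  have hinner : ∀ x ∈ tsupport ρ,
      ‖∫ y : Fin d → ℝ, h (x - y) * ρ x * ρ y‖ ≤ M * M * ∫ z in B, |h z| := by
    intro x hx
    rw [← integral_indicator hB.measurableSet,
      ← integral_sub_left_eq_self (B.indicator fun z => |h z|) volume x, ← integral_const_mul]
    refine norm_integral_le_of_norm_le ((hInd.comp_sub_left x).const_mul _)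
      (.of_forall fun y => ?_)
    by_cases hy : y ∈ tsupport ρ
    · rw [Set.indicator_of_mem (hsub x hx y hy), norm_mul, norm_mul, Real.norm_eq_abs,
        Real.norm_eq_abs, Real.norm_eq_abs]
      calc |h (x - y)| * |ρ x| * |ρ y| ≤ |h (x - y)| * M * M := by
            gcongr
            exacts [hM x, hM y]
        _ = M * M * |h (x - y)| := by ring
    · rw [hzero y hy, mul_zero, norm_zero]
      exact mul_nonneg (mul_nonneg hM0 hM0) (Set.indicator_nonneg (fun _ _ => abs_nonneg _) _)
  rw [← setIntegral_eq_integral_of_forall_compl_eq_zero (s := tsupport ρ)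
    fun x hx => by simp [hzero x hx]]
  refine (norm_setIntegral_le_of_norm_le_const hρs.isCompact.measure_lt_top hinner).trans_eq ?_
  ring

end BilinearForm

/-- convergence of the regularized variances,
`ε^α ∫∫ G(x−y) ρ_ε(x) ρ_ε(y) dx dy → ∫∫ g(x−y) ρ(x) ρ(y) dx dy` as `ε → 0⁺`. -/
theorem stmt13 (d : ℕ) (hd : 1 ≤ d) (s : Fin d → ℝ) (hs : ∀ j, 1 ≤ s j)
    (α Λ : ℝ) (hα0 : 0 < α) (hα : α < ∑ j, s j) (hΛ : 0 < Λ)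
    (G : (Fin d → ℝ) → ℝ) (hGmeas : Measurable G)
    (hG0 : ∀ x, x ≠ 0 → 0 ≤ G x) (hGbd : ∀ x, x ≠ 0 → G x ≤ Λ * anorm s x ^ (-α))
    (g : (Fin d → ℝ) → ℝ) (hg : LocallyIntegrable g)
    (hconv : ∀ Ωs : Set (Fin d → ℝ), MeasurableSet Ωs → Bornology.IsBounded Ωs →
      Tendsto (fun ε : ℝ => ∫ x in Ωs, |ε ^ α * G (fun j => ε ^ (s j) * x j) - g x|)
        (nhdsWithin 0 (Set.Ioi 0)) (nhds 0))
    (ρ : (Fin d → ℝ) → ℝ) (hρc : Continuous ρ) (hρsupp : HasCompactSupport ρ) :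
    Tendsto (fun ε : ℝ =>
        ε ^ α * ∫ x : Fin d → ℝ, ∫ y : Fin d → ℝ, G (x - y) * scaled s ε ρ x * scaled s ε ρ y)
      (nhdsWithin 0 (Set.Ioi 0))
      (nhds (∫ x : Fin d → ℝ, ∫ y : Fin d → ℝ, g (x - y) * ρ x * ρ y)) := by
  have hs0 : ∀ j, 0 < s j := fun j => one_pos.trans_le (hs j)
  obtain ⟨M, hM⟩ := hρc.bounded_above_of_compact_support hρsupp
  let B : Set (Fin d → ℝ) := Set.image (fun p : (Fin d → ℝ) × (Fin d → ℝ) => p.1 - p.2)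
    (tsupport ρ ×ˢ tsupport ρ)
  have hB : IsCompact B := (hρsupp.isCompact.prod hρsupp.isCompact).image continuous_sub
  have hsub : ∀ x ∈ tsupport ρ, ∀ y ∈ tsupport ρ, x - y ∈ B :=
    fun x hx y hy => ⟨(x, y), ⟨hx, hy⟩, rfl⟩
  have hlim := (hconv B hB.measurableSet hB.isBounded).const_mul
    (M * M * volume.real (tsupport ρ))
  rw [mul_zero] at hlim
  rw [tendsto_iff_norm_sub_tendsto_zero]
  refine squeeze_zero' (.of_forall fun _ => norm_nonneg _) ?_ hlim
  filter_upwards [self_mem_nhdsWithin] with ε hε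
  have hε0 : (0 : ℝ) < ε := hε
  have hGε : LocallyIntegrable fun x : Fin d → ℝ => ε ^ α * G (fun j => ε ^ s j * x j) :=
    (locallyIntegrable_comp_diagonal hd hs0 hα0.le hα hΛ.le hGmeas hG0 hGbd
      fun j => Real.rpow_pos_of_pos hε0 (s j)).smul (ε ^ α)
  have key := abs_integral_kernel_mul_le hρsupp hM (hGε.sub hg) hB hsub
  rw [integral_scaled s G ρ hε0, ← integral_const_mul, Real.norm_eq_abs]
  simp_rw [← integral_const_mul, ← mul_assoc]
  rw [← integral_sub (integrable_integral_kernel_mul hρc hρsupp hGε)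
    (integrable_integral_kernel_mul hρc hρsupp hg)]
  simp_rw [← integral_sub (integrable_kernel_mul hρc hρsupp hGε _)
    (integrable_kernel_mul hρc hρsupp hg _), ← sub_mul]
  rw [integral_const_mul]
  exact key
end
end

section
/- Let Λ > 1 and m, r ∈ ℕ and J ≥ 1 an integer. There exists C > 0, depending only on Λ, m, r and J, such that the following holds. Let (X₁, …, X_J) be centered jointly Gaussian real random variables with E X_j² ∈ [Λ^{−1}, Λ] for every j, let n₁, …, n_J ∈ ℕ, and define Φ : ℝ^J → ℂ by Φ(β₁, …, β_J) := (∏_{j=1}^J β_j^{n_j}) · E ∏_{j=1}^J h_{max(m−n_j,0)}(β_j, X_j; E X_j²). Then |(∂_{β₁}^r ⋯ ∂_{β_J}^r Φ)(θ, …, θ)| ≤ C · (C(1+|θ|))^{n₁+⋯+n_J} for every θ ∈ ℝ. -/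
open MeasureTheory ProbabilityTheory Filter

noncomputable section

/-- The partial derivative in the `j`-th coordinate. -/
def pderiv' {J : ℕ} (j : Fin J) (F : (Fin J → ℝ) → ℂ) : (Fin J → ℝ) → ℂ :=
  fun β => deriv (fun t => F (Function.update β j t)) (β j)

/-- The mixed partial derivative `∂_{β₁}^r ⋯ ∂_{β_J}^r`. -/
def mixedDeriv {J : ℕ} (r : ℕ) (F : (Fin J → ℝ) → ℂ) : (Fin J → ℝ) → ℂ :=
  (List.finRange J).foldr (fun j G => (pderiv' j)^[r] G) F

theorem pow_le_factorial_mul_exp {x : ℝ} (hx : 0 ≤ x) (n : ℕ) :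
    x ^ n ≤ n.factorial * Real.exp x := by
  have h := Real.pow_div_factorial_le_exp x hx n
  rwa [div_le_iff₀' (by positivity)] at h

theorem iteratedDeriv_ofReal_pow (n l : ℕ) :
    iteratedDeriv l (fun t : ℝ => (t : ℂ) ^ n) =
      fun t : ℝ => (n.descFactorial l : ℂ) * (t : ℂ) ^ (n - l) := by
  induction l with
  | zero => ext; simp
  | succ l ih =>
    ext t
    have h : HasDerivAt (fun s : ℝ => (n.descFactorial l : ℂ) * (s : ℂ) ^ (n - l))
        ((n.descFactorial l : ℂ) * (((n - l : ℕ) : ℂ) * (t : ℂ) ^ (n - l - 1))) t := by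
      simpa using (((hasDerivAt_id (t : ℂ)).pow (n - l)).comp_ofReal).const_mul
        (n.descFactorial l : ℂ)
    rw [iteratedDeriv_succ, ih, h.deriv, Nat.descFactorial_succ, Nat.sub_sub]
    push_cast
    ring

theorem norm_iteratedDeriv_ofReal_pow_le (n l : ℕ) (t : ℝ) :
    ‖iteratedDeriv l (fun s : ℝ => (s : ℂ) ^ n) t‖ ≤
      l.factorial * (Real.exp 1 * (1 + |t|)) ^ n := by
  rw [iteratedDeriv_ofReal_pow]
  simp only [norm_mul, Complex.norm_natCast, norm_pow, Complex.norm_real, Real.norm_eq_abs]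
  have h1 : (n.descFactorial l : ℝ) ≤ l.factorial * Real.exp 1 ^ n := by
    calc (n.descFactorial l : ℝ) ≤ (n : ℝ) ^ l := mod_cast Nat.descFactorial_le_pow n l
      _ ≤ l.factorial * Real.exp n := pow_le_factorial_mul_exp n.cast_nonneg l
      _ = l.factorial * Real.exp 1 ^ n := by rw [← Real.exp_nat_mul, mul_one]
  have h2 : |t| ^ (n - l) ≤ (1 + |t|) ^ n :=
    calc |t| ^ (n - l) ≤ (1 + |t|) ^ (n - l) := by gcongr; linarith
      _ ≤ (1 + |t|) ^ n := by
        gcongr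
        · linarith [abs_nonneg t]
        · omega
  calc _ ≤ l.factorial * Real.exp 1 ^ n * (1 + |t|) ^ n := by gcongr
    _ = _ := by rw [mul_pow]; ring

theorem iteratedDeriv_cexp_I_mul (x : ℝ) (s : ℕ) :
    iteratedDeriv s (fun t : ℝ => Complex.exp (Complex.I * t * x)) =
      fun t : ℝ => (Complex.I * x) ^ s * Complex.exp (Complex.I * t * x) := by
  induction s with
  | zero => ext; simp
  | succ s ih =>
    ext t
    have h0 : HasDerivAt (fun u : ℝ => Complex.I * (u : ℂ) * x) (Complex.I * x) t := by
      simpa using (((hasDerivAt_id (t : ℂ)).comp_ofReal).const_mul Complex.I).mul_const (x : ℂ)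
    rw [iteratedDeriv_succ, ih, (h0.cexp.const_mul _).deriv]
    ring

/-- The map `t ↦ tⁿ exp (-a t² / 2)`. -/
def gaussMonomial (a : ℝ) (n : ℕ) (t : ℝ) : ℂ :=
  (t : ℂ) ^ n * Complex.exp (((-(a * t ^ 2) / 2 : ℝ) : ℂ))

theorem contDiff_gaussMonomial (a : ℝ) (n : ℕ) (k : WithTop ℕ∞) :
    ContDiff ℝ k (gaussMonomial a n) := by
  have h1 : ContDiff ℝ k (fun t : ℝ => (t : ℂ)) := Complex.ofRealCLM.contDiff
  have h2 : ContDiff ℝ k (fun t : ℝ => ((-(a * t ^ 2) / 2 : ℝ) : ℂ)) :=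
    Complex.ofRealCLM.contDiff.comp
      ((contDiff_const.mul (contDiff_id.pow 2)).neg.div_const 2)
  exact (h1.pow n).mul h2.cexp

theorem deriv_gaussMonomial (a : ℝ) (n : ℕ) :
    deriv (gaussMonomial a n) =
      fun t => (n : ℂ) * gaussMonomial a (n - 1) t - (a : ℂ) * gaussMonomial a (n + 1) t := by
  ext t
  have h1 : HasDerivAt (fun s : ℝ => (s : ℂ) ^ n) ((n : ℂ) * (t : ℂ) ^ (n - 1)) t := by
    simpa using ((hasDerivAt_id (t : ℂ)).pow n).comp_ofReal
  have h2 : HasDerivAt (fun s : ℝ => -(a * s ^ 2) / 2) (-(a * t)) t := by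
    refine (((hasDerivAt_pow 2 t).const_mul a).neg.div_const 2).congr_deriv ?_
    norm_num
    ring
  have h3 := h1.mul h2.ofReal_comp.cexp
  have h4 : gaussMonomial a n = (fun s : ℝ => (s : ℂ) ^ n) *
      fun s : ℝ => Complex.exp (((-(a * s ^ 2) / 2 : ℝ) : ℂ)) := rfl
  rw [h4, h3.deriv]
  simp only [gaussMonomial]
  push_cast
  ring

theorem exists_norm_gaussMonomial_le {Λ : ℝ} (hΛ : 1 < Λ) (n : ℕ) :
    ∃ C, 0 ≤ C ∧ ∀ a ∈ Set.Icc Λ⁻¹ Λ, ∀ t, ‖gaussMonomial a n t‖ ≤ C := by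
  have hΛ0 : 0 < Λ := by linarith
  refine ⟨1 + (2 * Λ) ^ n * n.factorial, by positivity, fun a ha t => ?_⟩
  have hexp : ‖gaussMonomial a n t‖ = |t| ^ n * Real.exp (-(a * t ^ 2) / 2) := by
    rw [gaussMonomial, norm_mul, norm_pow, Complex.norm_real, Complex.norm_exp,
      Complex.ofReal_re, Real.norm_eq_abs]
  set y : ℝ := t ^ 2 / (2 * Λ) with hy
  have hy0 : 0 ≤ y := by positivity
  have h1 : Real.exp (-(a * t ^ 2) / 2) ≤ Real.exp (-y) := by
    apply Real.exp_le_exp.mpr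
    have : Λ⁻¹ * t ^ 2 ≤ a * t ^ 2 := by gcongr; exact ha.1
    have h : y = Λ⁻¹ * t ^ 2 / 2 := by rw [hy]; field_simp
    rw [h]; linarith
  have h2 : |t| ^ n ≤ 1 + (2 * Λ) ^ n * y ^ n := by
    have : (2 * Λ) ^ n * y ^ n = (|t| ^ n) ^ 2 := by
      rw [← mul_pow, hy, mul_div_cancel₀ _ (by positivity), ← sq_abs, pow_right_comm]
    rw [this]
    nlinarith [sq_nonneg (|t| ^ n - 1)]
  have h3 := pow_le_factorial_mul_exp hy0 n
  have h4 : Real.exp (-y) ≤ 1 := Real.exp_le_one_iff.mpr (by linarith)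
  rw [hexp]
  calc |t| ^ n * Real.exp (-(a * t ^ 2) / 2)
      ≤ (1 + (2 * Λ) ^ n * (n.factorial * Real.exp y)) * Real.exp (-y) := by
        gcongr
        exact h2.trans (by gcongr)
    _ = Real.exp (-y) + (2 * Λ) ^ n * n.factorial * (Real.exp y * Real.exp (-y)) := by ring
    _ ≤ 1 + (2 * Λ) ^ n * n.factorial := by
        rw [← Real.exp_add, add_neg_cancel, Real.exp_zero, mul_one]
        gcongr

theorem exists_norm_iteratedDeriv_gaussMonomial_le {Λ : ℝ} (hΛ : 1 < Λ) (s n : ℕ) :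
    ∃ C, 0 ≤ C ∧ ∀ a ∈ Set.Icc Λ⁻¹ Λ, ∀ t, ‖iteratedDeriv s (gaussMonomial a n) t‖ ≤ C := by
  have hΛ0 : 0 < Λ := by linarith
  induction s generalizing n with
  | zero => simpa using exists_norm_gaussMonomial_le hΛ n
  | succ s ih =>
    obtain ⟨C₁, hC₁, h₁⟩ := ih (n - 1)
    obtain ⟨C₂, hC₂, h₂⟩ := ih (n + 1)
    refine ⟨n * C₁ + Λ * C₂, by positivity, fun a ha t => ?_⟩
    have ha0 : 0 ≤ a := (inv_nonneg.mpr hΛ0.le).trans ha.1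
    rw [iteratedDeriv_succ', deriv_gaussMonomial, iteratedDeriv_fun_sub
      (contDiff_const.mul (contDiff_gaussMonomial a _ _)).contDiffAt
      (contDiff_const.mul (contDiff_gaussMonomial a _ _)).contDiffAt]
    rw [iteratedDeriv_const_mul_field, iteratedDeriv_const_mul_field]
    refine (norm_sub_le _ _).trans ?_
    rw [norm_mul, norm_mul, Complex.norm_natCast, Complex.norm_real, Real.norm_of_nonneg ha0]
    gcongr
    · exact h₁ a ha t
    · exact ha.2
    · exact h₂ a ha t

theorem continuous_wick (v : ℝ) (n : ℕ) : Continuous (wick v n) := by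
  unfold wick
  exact continuous_const.mul ((Polynomial.continuous_aeval _).comp (continuous_id.div_const _))

theorem exists_abs_wick_le {Λ : ℝ} (hΛ : 1 < Λ) (n : ℕ) :
    ∃ C, 0 ≤ C ∧ ∀ a ∈ Set.Icc Λ⁻¹ Λ, ∀ x, |wick a n x| ≤ C * Real.exp |x| := by
  have hΛ0 : 0 < Λ := by linarith
  set p := Polynomial.hermite n
  refine ⟨√Λ ^ n * ∑ i ∈ Finset.range (p.natDegree + 1), |(p.coeff i : ℝ)| *
    (√Λ ^ i * i.factorial), by positivity, fun a ha x => ?_⟩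
  have ha0 : 0 < a := (inv_pos.mpr hΛ0).trans_le ha.1
  have h1 : (√a)⁻¹ ≤ √Λ := by
    rw [← Real.sqrt_inv]
    exact Real.sqrt_le_sqrt (inv_le_of_inv_le₀ hΛ0 ha.1)
  rw [wick, Polynomial.aeval_eq_sum_range, abs_mul, abs_of_nonneg (by positivity), mul_assoc,
    Finset.sum_mul]
  gcongr
  · exact ha.2
  refine (Finset.abs_sum_le_sum_abs _ _).trans (Finset.sum_le_sum fun i _ => ?_)
  rw [zsmul_eq_mul, abs_mul, mul_assoc, abs_pow, div_eq_inv_mul, abs_mul,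
    abs_of_nonneg (inv_nonneg.mpr (Real.sqrt_nonneg a)), mul_pow, mul_assoc]
  gcongr
  exact pow_le_factorial_mul_exp (abs_nonneg x) i

theorem contDiff_cexp_I_mul (x : ℝ) (k : WithTop ℕ∞) :
    ContDiff ℝ k (fun t : ℝ => Complex.exp (Complex.I * t * x)) := by
  have h1 : ContDiff ℝ k (fun t : ℝ => (t : ℂ)) := Complex.ofRealCLM.contDiff
  exact ((contDiff_const.mul h1).mul contDiff_const).cexp

theorem hFun_eq_s15 (m : ℕ) (x a : ℝ) :
    (fun t => hFun m t x a) = fun t : ℝ => Complex.exp (Complex.I * t * x) -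
      ∑ n ∈ Finset.range m,
        (Complex.I ^ n / (n.factorial : ℂ) * (wick a n x : ℂ)) * gaussMonomial a n t := by
  ext t
  simp only [hFun, gaussMonomial]
  congr 1
  exact Finset.sum_congr rfl fun n _ => by ring

theorem contDiff_hFun (m : ℕ) (x a : ℝ) (k : WithTop ℕ∞) :
    ContDiff ℝ k (fun t => hFun m t x a) := by
  rw [hFun_eq_s15]
  exact (contDiff_cexp_I_mul x k).sub
    (ContDiff.sum fun n _ => contDiff_const.mul (contDiff_gaussMonomial a n k))

theorem iteratedDeriv_hFun_s15 (m s : ℕ) (t x a : ℝ) :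
    iteratedDeriv s (fun t => hFun m t x a) t =
      (Complex.I * x) ^ s * Complex.exp (Complex.I * t * x) -
        ∑ n ∈ Finset.range m, (Complex.I ^ n / (n.factorial : ℂ) * (wick a n x : ℂ)) *
          iteratedDeriv s (gaussMonomial a n) t := by
  rw [hFun_eq_s15, iteratedDeriv_fun_sub (contDiff_cexp_I_mul x s).contDiffAt
      (ContDiff.sum fun n _ =>
        contDiff_const.mul (contDiff_gaussMonomial a n s)).contDiffAt,
    iteratedDeriv_fun_sum fun n _ =>
      (contDiff_const.mul (contDiff_gaussMonomial a n s)).contDiffAt,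
    iteratedDeriv_cexp_I_mul]
  simp only [iteratedDeriv_const_mul_field]

theorem continuous_iteratedDeriv_hFun (m s : ℕ) (t a : ℝ) :
    Continuous fun x => iteratedDeriv s (fun t => hFun m t x a) t := by
  simp only [iteratedDeriv_hFun_s15]
  have h := fun n => Complex.continuous_ofReal.comp (continuous_wick a n)
  simp only [Function.comp_def] at h
  fun_prop

theorem exists_norm_iteratedDeriv_hFun_le {Λ : ℝ} (hΛ : 1 < Λ) (M s : ℕ) :
    ∃ C, 0 ≤ C ∧ ∀ m ≤ M, ∀ a ∈ Set.Icc Λ⁻¹ Λ, ∀ t x,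
      ‖iteratedDeriv s (fun t => hFun m t x a) t‖ ≤ C * Real.exp |x| := by
  choose W hW0 hW using exists_abs_wick_le hΛ
  choose D hD0 hD using exists_norm_iteratedDeriv_gaussMonomial_le hΛ s
  refine ⟨s.factorial + ∑ n ∈ Finset.range M, W n * D n,
    add_nonneg (by positivity) (Finset.sum_nonneg fun n _ => mul_nonneg (hW0 n) (hD0 n)),
    fun m hm a ha t x => ?_⟩
  rw [iteratedDeriv_hFun_s15, add_mul, Finset.sum_mul]
  refine (norm_sub_le _ _).trans (add_le_add ?_ ?_)
  · have h : ‖Complex.exp (Complex.I * t * x)‖ = 1 := by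
      rw [mul_assoc, ← Complex.ofReal_mul, mul_comm, Complex.norm_exp_ofReal_mul_I]
    rw [norm_mul, h, mul_one, norm_pow, norm_mul, Complex.norm_I, one_mul, Complex.norm_real]
    exact pow_le_factorial_mul_exp (norm_nonneg x) s
  · refine (norm_sum_le _ _).trans ?_
    refine le_trans ?_ (Finset.sum_le_sum_of_subset_of_nonneg
      (Finset.range_subset_range.mpr hm) fun n _ _ =>
        mul_nonneg (mul_nonneg (hW0 n) (hD0 n)) (Real.exp_pos _).le)
    refine Finset.sum_le_sum fun n _ => ?_
    have h1 : ‖Complex.I ^ n / (n.factorial : ℂ) * (wick a n x : ℂ)‖ ≤ W n * Real.exp |x| := by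
      rw [norm_mul, norm_div, norm_pow, Complex.norm_I, one_pow, Complex.norm_natCast,
        Complex.norm_real]
      refine le_trans (mul_le_of_le_one_left (norm_nonneg _) ?_) (hW n a ha x)
      exact div_le_one_of_le₀ (mod_cast Nat.one_le_iff_ne_zero.mpr n.factorial_ne_zero)
        (by positivity)
    rw [norm_mul]
    calc _ ≤ (W n * Real.exp |x|) * D n :=
          mul_le_mul h1 (hD n a ha t) (norm_nonneg _)
            (mul_nonneg (hW0 n) (Real.exp_pos _).le)
      _ = _ := by ring

/-- The factor `tᵖ h_m(t, x; a)` of the integrand. -/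
def powMulH (p m : ℕ) (x a t : ℝ) : ℂ := (t : ℂ) ^ p * hFun m t x a

theorem contDiff_ofReal_pow (p : ℕ) (k : WithTop ℕ∞) :
    ContDiff ℝ k (fun t : ℝ => (t : ℂ) ^ p) :=
  (show ContDiff ℝ k (fun t : ℝ => (t : ℂ)) from Complex.ofRealCLM.contDiff).pow p

theorem contDiff_powMulH (p m : ℕ) (x a : ℝ) (k : WithTop ℕ∞) :
    ContDiff ℝ k (powMulH p m x a) :=
  (contDiff_ofReal_pow p k).mul (contDiff_hFun m x a k)

theorem iteratedDeriv_powMulH (p m k : ℕ) (x a t : ℝ) :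
    iteratedDeriv k (powMulH p m x a) t = ∑ i ∈ Finset.range (k + 1),
      k.choose i * iteratedDeriv i (fun t : ℝ => (t : ℂ) ^ p) t *
        iteratedDeriv (k - i) (fun t => hFun m t x a) t :=
  iteratedDeriv_fun_mul (contDiff_ofReal_pow p k).contDiffAt (contDiff_hFun m x a k).contDiffAt

theorem continuous_iteratedDeriv_powMulH (p m k : ℕ) (a t : ℝ) :
    Continuous fun x => iteratedDeriv k (powMulH p m x a) t := by
  simp only [iteratedDeriv_powMulH]
  exact continuous_finsetSum _ fun i _ =>
    continuous_const.mul (continuous_iteratedDeriv_hFun m (k - i) t a)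

theorem hasDerivAt_iteratedDeriv_powMulH (p m k : ℕ) (x a t : ℝ) :
    HasDerivAt (iteratedDeriv k (powMulH p m x a))
      (iteratedDeriv (k + 1) (powMulH p m x a) t) t := by
  rw [iteratedDeriv_succ]
  exact ((contDiff_powMulH p m x a (k + 1)).differentiable_iteratedDeriv k
    (mod_cast Nat.lt_succ_self k) t).hasDerivAt

theorem exists_norm_iteratedDeriv_powMulH_le {Λ : ℝ} (hΛ : 1 < Λ) (M k : ℕ) :
    ∃ C, 0 ≤ C ∧ ∀ p, ∀ m ≤ M, ∀ a ∈ Set.Icc Λ⁻¹ Λ, ∀ x t,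
      ‖iteratedDeriv k (powMulH p m x a) t‖ ≤
        C * (Real.exp 1 * (1 + |t|)) ^ p * Real.exp |x| := by
  choose H hH0 hH using exists_norm_iteratedDeriv_hFun_le hΛ M
  refine ⟨∑ i ∈ Finset.range (k + 1), k.choose i * i.factorial * H (k - i),
    Finset.sum_nonneg fun i _ => mul_nonneg (by positivity) (hH0 _), fun p m hm a ha x t => ?_⟩
  rw [iteratedDeriv_powMulH, mul_assoc, Finset.sum_mul]
  refine (norm_sum_le _ _).trans (Finset.sum_le_sum fun i _ => ?_)
  rw [norm_mul, norm_mul, Complex.norm_natCast]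
  calc _ ≤ k.choose i * (i.factorial * (Real.exp 1 * (1 + |t|)) ^ p) *
        (H (k - i) * Real.exp |x|) := by
        gcongr
        · exact norm_iteratedDeriv_ofReal_pow_le p i t
        · exact hH (k - i) m hm a ha t x
    _ = _ := by ring

section MixedDerivative

variable {Ω : Type*} [MeasurableSpace Ω] {P : Measure Ω} {J : ℕ}
  {G : Fin J → ℕ → ℝ → Ω → ℂ} {B : Fin J → ℕ → ℝ → ℝ} {Y : Fin J → Ω → ℝ}

theorem pderiv'_integral_prod
    (hder : ∀ j k t ω, HasDerivAt (fun s => G j k s ω) (G j (k + 1) t ω) t)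
    (hmeas : ∀ j k t, AEStronglyMeasurable (G j k t) P)
    (hbound : ∀ j k t ω, ‖G j k t ω‖ ≤ B j k t * Y j ω)
    (hB : ∀ j k s t, |s| ≤ |t| → B j k s ≤ B j k t)
    (hY : ∀ j ω, 0 ≤ Y j ω) (hint : Integrable (fun ω => ∏ j, Y j ω) P)
    (i : Fin J) (k : Fin J → ℕ) :
    pderiv' i (fun β => ∫ ω, ∏ j, G j (k j) (β j) ω ∂P) =
      fun β => ∫ ω, ∏ j, G j (Function.update k i (k i + 1) j) (β j) ω ∂P := by
  have hmeas' : ∀ (l : Fin J → ℕ) (γ : Fin J → ℝ),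
      AEStronglyMeasurable (fun ω => ∏ j, G j (l j) (γ j) ω) P := fun l γ =>
    Finset.aestronglyMeasurable_fun_prod _ fun j _ => hmeas j (l j) (γ j)
  have hbound' : ∀ (l : Fin J → ℕ) (γ δ : Fin J → ℝ) ω, (∀ j, |γ j| ≤ |δ j|) →
      ‖∏ j, G j (l j) (γ j) ω‖ ≤ (∏ j, B j (l j) (δ j)) * ∏ j, Y j ω := by
    intro l γ δ ω h
    rw [norm_prod, ← Finset.prod_mul_distrib]
    exact Finset.prod_le_prod (fun j _ => norm_nonneg _) fun j _ =>
      (hbound j (l j) (γ j) ω).trans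
        (mul_le_mul_of_nonneg_right (hB j (l j) _ _ (h j)) (hY j ω))
  ext β
  set l := Function.update k i (k i + 1) with hl
  set δ : Fin J → ℝ := Function.update β i (|β i| + 1) with hδ
  have key := hasDerivAt_integral_of_dominated_loc_of_deriv_le (μ := P) (x₀ := β i)
    (F := fun t ω => ∏ j, G j (k j) (Function.update β i t j) ω)
    (F' := fun t ω => ∏ j, G j (l j) (Function.update β i t j) ω)
    (bound := fun ω => (∏ j, B j (l j) (δ j)) * ∏ j, Y j ω)
    (Metric.ball_mem_nhds (β i) one_pos)
    (Eventually.of_forall fun t => hmeas' k _)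
    ((hint.const_mul (∏ j, B j (k j) (Function.update β i (β i) j))).mono' (hmeas' k _)
      (ae_of_all _ fun ω => hbound' k _ _ ω fun _ => le_rfl))
    (hmeas' l _)
    (ae_of_all _ fun ω t ht => hbound' l _ _ ω fun j => ?_)
    (hint.const_mul _)
    (ae_of_all _ fun ω t _ => ?_)
  · rw [pderiv', key.2.deriv, Function.update_eq_self]
  · rcases eq_or_ne j i with rfl | hj
    · simp only [hδ, Function.update_self]
      rw [Metric.mem_ball, Real.dist_eq] at ht
      rw [abs_of_nonneg (a := |β j| + 1) (by positivity)]
      linarith [abs_sub_abs_le_abs_sub t (β j)]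
    · simp [hδ, hj]
  · have hsplit : ∀ (q : Fin J → ℕ) (s : ℝ), ∏ j, G j (q j) (Function.update β i s j) ω =
        G i (q i) s ω * ∏ j ∈ Finset.univ.erase i, G j (q j) (β j) ω := by
      intro q s
      rw [← Finset.mul_prod_erase _ _ (Finset.mem_univ i), Function.update_self]
      congr 1
      refine Finset.prod_congr rfl fun j hj => ?_
      rw [Function.update_of_ne (Finset.ne_of_mem_erase hj)]
    simp only [hsplit]
    have hrest : ∏ j ∈ Finset.univ.erase i, G j (l j) (β j) ω =
        ∏ j ∈ Finset.univ.erase i, G j (k j) (β j) ω :=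
      Finset.prod_congr rfl fun j hj => by
        rw [hl, Function.update_of_ne (Finset.ne_of_mem_erase hj)]
    rw [hrest, hl, Function.update_self]
    exact (hder i (k i) t ω).mul_const _

theorem mixedDeriv_integral_prod
    (hder : ∀ j k t ω, HasDerivAt (fun s => G j k s ω) (G j (k + 1) t ω) t)
    (hmeas : ∀ j k t, AEStronglyMeasurable (G j k t) P)
    (hbound : ∀ j k t ω, ‖G j k t ω‖ ≤ B j k t * Y j ω)
    (hB : ∀ j k s t, |s| ≤ |t| → B j k s ≤ B j k t)
    (hY : ∀ j ω, 0 ≤ Y j ω) (hint : Integrable (fun ω => ∏ j, Y j ω) P) (r : ℕ) :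
    mixedDeriv r (fun β => ∫ ω, ∏ j, G j 0 (β j) ω ∂P) =
      fun β => ∫ ω, ∏ j, G j r (β j) ω ∂P := by
  have hiter : ∀ (i : Fin J) (s : ℕ) (k : Fin J → ℕ),
      (pderiv' i)^[s] (fun β => ∫ ω, ∏ j, G j (k j) (β j) ω ∂P) =
        fun β => ∫ ω, ∏ j, G j (Function.update k i (k i + s) j) (β j) ω ∂P := by
    intro i s k
    induction s with
    | zero => simp
    | succ s ih =>
      rw [Function.iterate_succ_apply', ih,
        pderiv'_integral_prod hder hmeas hbound hB hY hint, Function.update_idem,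
        Function.update_self, add_assoc]
  have hfold : ∀ l : List (Fin J),
      l.foldr (fun j F => (pderiv' j)^[r] F) (fun β => ∫ ω, ∏ j, G j 0 (β j) ω ∂P) =
        fun β => ∫ ω, ∏ j, G j (l.count j * r) (β j) ω ∂P := by
    intro l
    induction l with
    | nil => simp
    | cons i l ih =>
      have hk : (fun j => (i :: l).count j * r) =
          Function.update (fun j => l.count j * r) i (l.count i * r + r) := by
        ext j
        rcases eq_or_ne j i with rfl | hj
        · simp [add_mul]
        · simp [hj, hj.symm]
      rw [List.foldr_cons, ih, hiter i r fun j => l.count j * r, ← hk]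
  rw [mixedDeriv, hfold]
  simp only [List.count_eq_one_of_mem (List.nodup_finRange J) (List.mem_finRange _), one_mul]

end MixedDerivative

section Gaussian

variable {Ω : Type*} [MeasurableSpace Ω] {P : Measure Ω}

theorem IsCenteredGaussianFamily.exists_map_eq {ι : Type*} {X : ι → Ω → ℝ}
    (hX : IsCenteredGaussianFamily P X) (i : ι) :
    ∃ v : NNReal, P.map (X i) = gaussianReal 0 v := by
  simpa using hX {i} 1

theorem aemeasurable_of_map_eq_gaussianReal {X : Ω → ℝ} {μ : ℝ} {v : NNReal}
    (hX : P.map X = gaussianReal μ v) : AEMeasurable X P :=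
  aemeasurable_of_map_neZero (by rw [hX]; infer_instance)

theorem integral_sq_of_map_eq_gaussianReal {X : Ω → ℝ} {v : NNReal}
    (hX : P.map X = gaussianReal 0 v) : ∫ ω, X ω ^ 2 ∂P = v := by
  have h := integral_map (aemeasurable_of_map_eq_gaussianReal hX)
    (f := fun x : ℝ => x ^ 2) (by fun_prop)
  rw [← h, hX, ← variance_of_integral_eq_zero (X := fun x => x) (by fun_prop) (by simp),
    variance_fun_id_gaussianReal]

theorem integrable_exp_mul_of_map_eq_gaussianReal {X : Ω → ℝ} {μ : ℝ} {v : NNReal}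
    (hX : P.map X = gaussianReal μ v) (c : ℝ) : Integrable (fun ω => Real.exp (c * X ω)) P := by
  have h := integrable_exp_mul_gaussianReal (μ := μ) (v := v) c
  rw [← hX] at h
  exact h.comp_aemeasurable (aemeasurable_of_map_eq_gaussianReal hX)

theorem exp_sum_abs_le {J : ℕ} (hJ : 1 ≤ J) (x : Fin J → ℝ) :
    Real.exp (∑ j, |x j|) ≤ ∑ j, (Real.exp (J * x j) + Real.exp (-J * x j)) := by
  have : Nonempty (Fin J) := ⟨⟨0, hJ⟩⟩
  obtain ⟨i, -, hi⟩ := Finset.exists_max_image Finset.univ (fun j => |x j|)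
    Finset.univ_nonempty
  have hle : ∑ j, |x j| ≤ J * |x i| := by
    simpa using Finset.sum_le_card_nsmul Finset.univ (fun j => |x j|) (|x i|) hi
  calc Real.exp (∑ j, |x j|) ≤ Real.exp (J * |x i|) := Real.exp_le_exp.mpr hle
    _ ≤ Real.exp (J * x i) + Real.exp (-J * x i) := by
        rcases abs_cases (x i) with ⟨h, _⟩ | ⟨h, _⟩ <;> rw [h]
        · linarith [Real.exp_pos (-J * x i)]
        · rw [mul_neg, ← neg_mul]
          linarith [Real.exp_pos (J * x i)]
    _ ≤ _ := Finset.single_le_sum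
        (f := fun j => Real.exp (J * x j) + Real.exp (-J * x j))
        (fun j _ => by positivity) (Finset.mem_univ i)

theorem integrable_and_integral_exp_sum_abs_le {J : ℕ} (hJ : 1 ≤ J) {X : Fin J → Ω → ℝ}
    {v : Fin J → NNReal} (hX : ∀ j, P.map (X j) = gaussianReal 0 (v j)) {Λ : ℝ}
    (hv : ∀ j, (v j : ℝ) ≤ Λ) :
    Integrable (fun ω => Real.exp (∑ j, |X j ω|)) P ∧
      ∫ ω, Real.exp (∑ j, |X j ω|) ∂P ≤ J * (2 * Real.exp (Λ * J ^ 2 / 2)) := by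
  have hterm : ∀ j, Integrable
      (fun ω => Real.exp (J * X j ω) + Real.exp (-J * X j ω)) P := fun j =>
    (integrable_exp_mul_of_map_eq_gaussianReal (hX j) _).add
      (integrable_exp_mul_of_map_eq_gaussianReal (hX j) _)
  have hsum := integrable_finsetSum Finset.univ fun j _ => hterm j
  have hint : Integrable (fun ω => Real.exp (∑ j, |X j ω|)) P := by
    refine hsum.mono' ?_ (ae_of_all _ fun ω => ?_)
    · have hm := fun j => aemeasurable_of_map_eq_gaussianReal (hX j)
      exact (Real.measurable_exp.comp_aemeasurable
        (Finset.aemeasurable_fun_sum _ fun j _ => (hm j).abs)).aestronglyMeasurable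
    · rw [Real.norm_of_nonneg (Real.exp_pos _).le]
      exact exp_sum_abs_le hJ fun j => X j ω
  refine ⟨hint, (integral_mono hint hsum fun ω => exp_sum_abs_le hJ fun j => X j ω).trans ?_⟩
  rw [integral_finsetSum _ fun j _ => hterm j]
  refine (Finset.sum_le_card_nsmul Finset.univ _ (2 * Real.exp (Λ * J ^ 2 / 2))
    fun j _ => ?_).trans_eq (by simp)
  rw [integral_add (integrable_exp_mul_of_map_eq_gaussianReal (hX j) _)
    (integrable_exp_mul_of_map_eq_gaussianReal (hX j) _)]
  have h1 := mgf_gaussianReal (hX j) (J : ℝ)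
  have h2 := mgf_gaussianReal (hX j) (-J : ℝ)
  rw [mgf] at h1 h2
  rw [h1, h2, neg_sq, zero_mul, zero_mul, zero_add, two_mul]
  have := hv j
  gcongr

end Gaussian

/-- Lemma 2.3: the chaos coefficient bound
`|(∂_{β₁}^r ⋯ ∂_{β_J}^r Φ)(θ,…,θ)| ≤ C (C(1+|θ|))^{n₁+⋯+n_J}` for
`Φ(β) = (∏_j β_j^{n_j}) · E ∏_j h_{max(m−n_j,0)}(β_j, X_j; E X_j²)`. -/
theorem stmt15 (Λ : ℝ) (hΛ : 1 < Λ) (m r : ℕ) (J : ℕ) (hJ : 1 ≤ J) :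
    ∃ C > 0,
      ∀ (Ω : Type) (_ : MeasurableSpace Ω) (P : Measure Ω), IsProbabilityMeasure P →
      ∀ X : Fin J → Ω → ℝ, IsCenteredGaussianFamily P X →
        (∀ j, (∫ ω, X j ω ^ 2 ∂P) ∈ Set.Icc Λ⁻¹ Λ) →
        ∀ (n : Fin J → ℕ) (θ : ℝ),
          ‖mixedDeriv r (fun β => (∏ j, (β j : ℂ) ^ n j) *
                ∫ ω, ∏ j, hFun (m - n j) (β j) (X j ω) (∫ ω', X j ω' ^ 2 ∂P) ∂P)
              (fun _ => θ)‖ ≤ C * (C * (1 + |θ|)) ^ (∑ j, n j) := by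
  choose A hA0 hA using exists_norm_iteratedDeriv_powMulH_le hΛ m
  set K : ℝ := J * (2 * Real.exp (Λ * J ^ 2 / 2))
  have hAK : 0 ≤ A r ^ J * K := mul_nonneg (pow_nonneg (hA0 r) J) (by positivity)
  refine ⟨A r ^ J * K + Real.exp 1, by positivity, ?_⟩
  intro Ω _ P _ X hX hvar n θ
  choose v hv using hX.exists_map_eq
  have hvΛ : ∀ j, (v j : ℝ) ≤ Λ := fun j => by
    rw [← integral_sq_of_map_eq_gaussianReal (hv j)]
    exact (hvar j).2
  obtain ⟨hint, hintle⟩ := integrable_and_integral_exp_sum_abs_le hJ hv hvΛ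
  set a : Fin J → ℝ := fun j => ∫ ω, X j ω ^ 2 ∂P
  set G : Fin J → ℕ → ℝ → Ω → ℂ := fun j k t ω =>
    iteratedDeriv k (powMulH (n j) (m - n j) (X j ω) (a j)) t with hG
  have hbound : ∀ j k t ω, ‖G j k t ω‖ ≤
      (A k * (Real.exp 1 * (1 + |t|)) ^ n j) * Real.exp |X j ω| := fun j k t ω =>
    hA k (n j) (m - n j) (Nat.sub_le _ _) (a j) (hvar j) (X j ω) t
  have hmixed := mixedDeriv_integral_prod (P := P) (G := G)
    (B := fun j k t => A k * (Real.exp 1 * (1 + |t|)) ^ n j)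
    (Y := fun j ω => Real.exp |X j ω|)
    (fun j k t ω => hasDerivAt_iteratedDeriv_powMulH _ _ k _ _ t)
    (fun j k t => ((continuous_iteratedDeriv_powMulH _ _ k _ t).measurable.comp_aemeasurable
      (aemeasurable_of_map_eq_gaussianReal (hv j))).aestronglyMeasurable)
    hbound
    (fun j k s t hst => by have := hA0 k; gcongr)
    (fun j ω => (Real.exp_pos _).le)
    (by simpa only [← Real.exp_sum] using hint) r
  have hΦ : (fun β : Fin J → ℝ => (∏ j, (β j : ℂ) ^ n j) *
      ∫ ω, ∏ j, hFun (m - n j) (β j) (X j ω) (a j) ∂P) =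
        fun β => ∫ ω, ∏ j, G j 0 (β j) ω ∂P := by
    ext β
    rw [← integral_const_mul]
    simp only [hG, iteratedDeriv_zero, powMulH, Finset.prod_mul_distrib]
  rw [hΦ, hmixed]
  calc ‖∫ ω, ∏ j, G j r θ ω ∂P‖
      ≤ ∫ ω, (∏ j, A r * (Real.exp 1 * (1 + |θ|)) ^ n j) * Real.exp (∑ j, |X j ω|) ∂P := by
        refine norm_integral_le_of_norm_le (hint.const_mul _) (ae_of_all _ fun ω => ?_)
        rw [norm_prod, Real.exp_sum, ← Finset.prod_mul_distrib]
        exact Finset.prod_le_prod (fun j _ => norm_nonneg _) fun j _ => hbound j r θ ω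
    _ = A r ^ J * (∫ ω, Real.exp (∑ j, |X j ω|) ∂P) *
          (Real.exp 1 * (1 + |θ|)) ^ ∑ j, n j := by
        rw [integral_const_mul, Finset.prod_mul_distrib, Finset.prod_pow_eq_pow_sum]
        simp only [Finset.prod_const, Finset.card_univ, Fintype.card_fin]
        ring
    _ ≤ (A r ^ J * K + Real.exp 1) *
          ((A r ^ J * K + Real.exp 1) * (1 + |θ|)) ^ ∑ j, n j := by
        have h1 : A r ^ J * (∫ ω, Real.exp (∑ j, |X j ω|) ∂P) ≤ A r ^ J * K + Real.exp 1 :=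
          (mul_le_mul_of_nonneg_left hintle (pow_nonneg (hA0 r) J)).trans
            (by linarith [Real.exp_pos 1])
        gcongr
        linarith
end
end
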